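/- arXiv:2512.04633 — 2 statements merged into one kernel-verified Lean document; each statement's English description precedes it below -/
import Mathlib

section
/- For every pair (τ, s) with 1 ≤ s ≤ 2 and 2/(s+1) ≤ τ ≤ c(s), there exists a Minkowski centered convex body K ⊆ ℝ² such that s(K) = s and τ(K) = τ. -/
open scoped Pointwise RealInnerProductSpace
open Set

noncomputable section

abbrev E2 := EuclideanSpace ℝ (Fin 2)

/-- A convex body: compact convex set with nonempty interior. -/
def IsConvexBody (K : Set E2) : Prop :=
  Convex ℝ K ∧ IsCompact K ∧ (interior K).Nonempty

/-- circumradius `R(K,C)` -/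
def circum (K C : Set E2) : ℝ :=
  sInf {ρ : ℝ | 0 < ρ ∧ ∃ t : E2, K ⊆ ρ • C + {t}}

/-- inradius `r(K,C)` -/
def inrad (K C : Set E2) : ℝ :=
  sSup {ρ : ℝ | 0 < ρ ∧ ∃ t : E2, ρ • C + {t} ⊆ K}

/-- width `w(K,C)` -/
def widthB (K C : Set E2) : ℝ := 2 * inrad (K - K) (C - C)

/-- diameter `D(K,C)` -/
def diamB (K C : Set E2) : ℝ := 2 * circum (K - K) (C - C)

/-- Minkowski asymmetry `s(K)` -/
def minkAsym (K : Set E2) : ℝ :=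
  sInf {ρ : ℝ | 0 < ρ ∧ ∃ c : E2, K - {c} ⊆ ρ • ({c} - K)}

/-- `K` is Minkowski centered -/
def MinkCentered (K : Set E2) : Prop := K ⊆ minkAsym K • (-K)

/-- `τ(K)`: smallest `ρ > 0` with `K ∩ (-K) ⊆ ρ • ((K-K)/2)` -/
def tauB (K : Set E2) : ℝ :=
  sInf {ρ : ℝ | 0 < ρ ∧ K ∩ (-K) ⊆ ρ • ((2:ℝ)⁻¹ • (K - K))}

/-- golden ratio -/
def phiR : ℝ := (1 + Real.sqrt 5) / 2

def cExpr2 (s : ℝ) : ℝ :=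
  (s^2+1)^2 / ((s^2-1) * (s^2+2*s-1+2*Real.sqrt (s*(s^2-1))))

def cExpr3 (s : ℝ) : ℝ := 2*(s^2-2*s-1) / ((s-3)*(s+1))

/-- `ŝ`: the unique `s ∈ (φ,2)` where the two expressions agree. -/
def sHat : ℝ := sInf {s : ℝ | phiR < s ∧ s < 2 ∧ cExpr2 s = cExpr3 s}

def cFun (s : ℝ) : ℝ :=
  if s ≤ phiR then 1 else if s ≤ sHat then cExpr2 s else cExpr3 s

/-- polar body -/
def polarBody (K : Set E2) : Set E2 := {y | ∀ x ∈ K, (inner ℝ x y : ℝ) ≤ 1}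

/-- `γ(K)` -/
def gammaB (K : Set E2) : ℝ :=
  sInf {ρ : ℝ | 0 < ρ ∧
    polarBody ((2:ℝ)⁻¹ • (polarBody K - polarBody K)) ⊆ ρ • convexHull ℝ (K ∪ -K)}

/-- positive hull of two points -/
def posHull2 (a b : E2) : Set E2 := {x | ∃ α β : ℝ, 0 ≤ α ∧ 0 ≤ β ∧ x = α • a + β • b}

/-- asymmetry point of `K`: a point of `bd(K) ∩ bd(−(1/s(K))·K)` -/
def IsAsymPoint (K : Set E2) (p : E2) : Prop :=
  p ∈ frontier K ∧ p ∈ frontier ((-(minkAsym K)⁻¹) • K)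

/-- a well-spread triple of asymmetry points -/
def WellSpread (K : Set E2) (p1 p2 p3 : E2) : Prop :=
  IsAsymPoint K p1 ∧ IsAsymPoint K p2 ∧ IsAsymPoint K p3 ∧
  ∃ a1 a2 a3 : E2, a1 ≠ 0 ∧ a2 ≠ 0 ∧ a3 ≠ 0 ∧
    (∀ x ∈ K, (inner ℝ a1 x : ℝ) ≤ inner ℝ a1 p1) ∧
    (∀ x ∈ K, (inner ℝ a2 x : ℝ) ≤ inner ℝ a2 p2) ∧
    (∀ x ∈ K, (inner ℝ a3 x : ℝ) ≤ inner ℝ a3 p3) ∧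
    (0:E2) ∈ interior (convexHull ℝ {p1, p2, p3}) ∧
    (0:E2) ∈ convexHull ℝ {a1, a2, a3}

/-- two points of `bd(K) ∩ bd(-K)` are consecutive -/
def Consecutive (K : Set E2) (z1 z2 : E2) : Prop :=
  ¬ ∃ z, z ∈ frontier K ∩ frontier (-K) ∧ z ∈ interior (posHull2 z1 z2)

/-- point of the plane from coordinates -/
def pt (x y : ℝ) : E2 := (WithLp.equiv 2 (Fin 2 → ℝ)).symm ![x, y]

/-- the golden house -/
def goldenHouse : Set E2 :=
  convexHull ℝ {pt 1 0, pt (-1) 0, pt 1 (-1), pt (-1) (-1), pt 0 phiR}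


/-!
Let `T` be a triangle containing the origin in its interior and let `P = T ∩ (-s • T)`. If a body
`K ⊆ P` with `K ⊆ s • (-K)` touches all three edges of `-s • T`, then every body `L` with
`K ⊆ L ⊆ P` and `L ⊆ s • (-L)` has asymmetry exactly `s`, because the edge normals of `T` satisfy a
positive linear relation. The extreme choice `L = P` has `τ(P) ≤ 2 / (s + 1)`. Cutting `P` by a
strip `-β ≤ g ≤ α` produces a body `K` with `τ(K) ≥ 2 g(z) / (α + β)` whenever `±z ∈ K`. Since
`t ↦ τ(P ∩ t • K)` is continuous, all values between `τ(P)` and `τ(K)` are attained.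

For `s ≤ φ` a symmetric strip touching `P` at `±z` gives `τ(K) = 1`. For `s > φ` there is a
one-parameter family of triangles and strips, with parameter `1 ≤ L ≤ 1 / (s - 1)`, and `c(s)` is
the maximum of `2 g(z) / (α + β)` over this family: the maximizer is the critical point
`criticalL s` as long as that point is admissible, which is the case up to `ŝ`, and it is the
endpoint `1 / (s - 1)` afterwards.
-/

section PointwiseSets

variable {E : Type*} [AddCommGroup E] [Module ℝ E]

lemma mem_smul_half_sub_iff {K : Set E} {ρ : ℝ} {x : E} :
    x ∈ ρ • ((2 : ℝ)⁻¹ • (K - K)) ↔ ∃ k ∈ K, ∃ k' ∈ K, (ρ / 2) • (k - k') = x := by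
  rw [smul_smul, ← div_eq_mul_inv]
  constructor
  · rintro ⟨_, ⟨k, hk, k', hk', rfl⟩, rfl⟩
    exact ⟨k, hk, k', hk', rfl⟩
  · rintro ⟨k, hk, k', hk', rfl⟩
    exact smul_mem_smul_set (sub_mem_sub hk hk')

lemma inter_neg_subset_half_sub (K : Set E) :
    K ∩ (-K) ⊆ (1 : ℝ) • ((2 : ℝ)⁻¹ • (K - K)) := by
  rintro x ⟨hx, hx'⟩
  refine mem_smul_half_sub_iff.2 ⟨x, hx, -x, hx', ?_⟩
  rw [sub_neg_eq_add, ← two_smul ℝ x, smul_smul]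
  norm_num

lemma smul_subset_smul_of_convex {K : Set E} (hK : Convex ℝ K) (h0 : 0 ∈ K) {a b : ℝ}
    (ha : 0 ≤ a) (hab : a ≤ b) : a • K ⊆ b • K := by
  obtain rfl | hb := (ha.trans hab).eq_or_lt
  · rw [le_antisymm hab ha]
  rintro _ ⟨x, hx, rfl⟩
  refine (mem_smul_set_iff_inv_smul_mem₀ hb.ne' _ _).2 ?_
  rw [smul_smul, inv_mul_eq_div]
  exact hK.smul_mem_of_zero_mem h0 hx ⟨by positivity, (div_le_one hb).2 hab⟩

lemma inter_smul_subset_smul_inter_smul {P K : Set E} (hP : Convex ℝ P) (hP0 : 0 ∈ P)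
    (hK : Convex ℝ K) (hK0 : 0 ∈ K) {q a b : ℝ} (hq : 1 ≤ q) (ha : 0 ≤ a) (hab : a ≤ q * b) :
    P ∩ a • K ⊆ q • (P ∩ b • K) := by
  rw [smul_set_inter₀ (by positivity), smul_smul]
  refine inter_subset_inter ?_ (smul_subset_smul_of_convex hK hK0 ha hab)
  simpa only [one_smul] using smul_subset_smul_of_convex hP hP0 zero_le_one hq

lemma inter_subset_smul_neg_inter {A B : Set E} {s : ℝ} (hs : s ≠ 0)
    (hA : A ⊆ s • (-A)) (hB : B ⊆ s • (-B)) : A ∩ B ⊆ s • (-(A ∩ B)) := by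
  rw [inter_neg, smul_set_inter₀ hs]
  exact inter_subset_inter hA hB

lemma iInter_subset_smul_neg_iInter {ι : Sort*} {A : ι → Set E} {s : ℝ} (hs : s ≠ 0)
    (hA : ∀ i, A i ⊆ s • (-A i)) : ⋂ i, A i ⊆ s • (-⋂ i, A i) := by
  rw [iInter_neg]
  exact (iInter_mono hA).trans (image_iInter (MulAction.bijective₀ hs) _).ge

lemma smul_subset_smul_neg_smul {K : Set E} {s : ℝ} (hK : K ⊆ s • (-K)) (t : ℝ) :
    t • K ⊆ s • (-(t • K)) := by
  rw [← smul_set_neg, smul_comm s t]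
  exact smul_set_mono hK

end PointwiseSets

section Tau

variable {K L : Set E2}

lemma tauB_le {ρ : ℝ} (hρ : 0 < ρ) (h : K ∩ (-K) ⊆ ρ • ((2 : ℝ)⁻¹ • (K - K))) :
    tauB K ≤ ρ :=
  csInf_le ⟨0, fun _ hρ' => hρ'.1.le⟩ ⟨hρ, h⟩

lemma le_tauB {a : ℝ}
    (h : ∀ ρ : ℝ, 0 < ρ → K ∩ (-K) ⊆ ρ • ((2 : ℝ)⁻¹ • (K - K)) → a ≤ ρ) : a ≤ tauB K :=
  le_csInf ⟨1, one_pos, inter_neg_subset_half_sub K⟩ fun ρ hρ => h ρ hρ.1 hρ.2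

lemma tauB_le_one (K : Set E2) : tauB K ≤ 1 :=
  tauB_le one_pos (inter_neg_subset_half_sub K)

lemma tauB_le_mul_tauB {a b : ℝ} (ha : 0 < a) (hb : 0 < b) (hKL : K ⊆ a • L)
    (hLK : L ⊆ b • K) : tauB K ≤ a * b * tauB L := by
  have hab : 0 < a * b := mul_pos ha hb
  rw [← div_le_iff₀' hab]
  refine le_tauB fun ρ hρ hL => ?_
  rw [div_le_iff₀' hab]
  refine tauB_le (by positivity) ?_
  rintro x ⟨hx, hx'⟩
  obtain ⟨y, hy, rfl⟩ := hKL hx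
  obtain ⟨y', hy', hyy'⟩ := hKL hx'
  obtain rfl : y' = -y := smul_right_injective E2 ha.ne' (hyy'.trans (smul_neg a y).symm)
  obtain ⟨l, hl, l', hl', rfl⟩ := mem_smul_half_sub_iff.1 (hL ⟨hy, hy'⟩)
  obtain ⟨k, hk, rfl⟩ := hLK hl
  obtain ⟨k', hk', rfl⟩ := hLK hl'
  refine mem_smul_half_sub_iff.2 ⟨k, hk, k', hk', ?_⟩
  module

lemma two_mul_div_le_tauB (g : E2 →L[ℝ] ℝ) {α β : ℝ} (hαβ : 0 < α + β)
    (hg : K ⊆ g ⁻¹' Icc (-β) α) {z : E2} (hz : z ∈ K) (hz' : -z ∈ K) :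
    2 * g z / (α + β) ≤ tauB K := by
  refine le_tauB fun ρ hρ hsub => ?_
  obtain ⟨k, hk, k', hk', hkz⟩ := mem_smul_half_sub_iff.1 (hsub ⟨hz, hz'⟩)
  rw [div_le_iff₀ hαβ]
  calc 2 * g z = ρ * (g k - g k') := by
        rw [← hkz, map_smul, map_sub, smul_eq_mul]; ring
    _ ≤ ρ * (α + β) := by
        gcongr
        linarith [(hg hk).2, (hg hk').1]

end Tau

section Asymmetry

lemma minkAsym_eq_of_touching {ι : Type*} [Fintype ι] {K : Set E2} {s : ℝ} (hs : 0 < s)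
    (hK : K ⊆ s • (-K)) (f : ι → E2 →L[ℝ] ℝ) (w : ι → ℝ) (hw : ∀ i, 0 ≤ w i)
    (hw_pos : 0 < ∑ i, w i) (hwf : ∀ x, ∑ i, w i * f i x = 0)
    (hf : ∀ i, ∀ x ∈ K, -1 ≤ f i x) (hp : ∀ i, ∃ p ∈ K, f i p = s) :
    minkAsym K = s := by
  have hmem : s ∈ {ρ : ℝ | 0 < ρ ∧ ∃ c : E2, K - {c} ⊆ ρ • ({c} - K)} :=
    ⟨hs, 0, by simpa using hK⟩
  refine le_antisymm (csInf_le ⟨0, fun ρ hρ => hρ.1.le⟩ hmem) (le_csInf ⟨s, hmem⟩ ?_)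
  rintro ρ ⟨hρ, c, hc⟩
  rw [sub_singleton, singleton_sub] at hc
  have touching (i : ι) : s - f i c ≤ ρ * (f i c + 1) := by
    obtain ⟨p, hpK, rfl⟩ := hp i
    obtain ⟨_, ⟨k, hk, rfl⟩, hkp⟩ := hc (mem_image_of_mem _ hpK)
    calc f i p - f i c = ρ * (f i c - f i k) := by
          simpa using congrArg (f i) hkp.symm
      _ ≤ ρ * (f i c + 1) := by
          gcongr
          linarith [hf i k hk]
  have weighted : ∑ i, w i * (s - f i c) ≤ ∑ i, w i * (ρ * (f i c + 1)) := by
    gcongr with i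
    · exact hw i
    · exact touching i
  have hleft : ∑ i, w i * (s - f i c) = (∑ i, w i) * s := by
    simp only [mul_sub, Finset.sum_sub_distrib, hwf, sub_zero, Finset.sum_mul]
  have hright : ∑ i, w i * (ρ * (f i c + 1)) = (∑ i, w i) * ρ := by
    simp_rw [mul_left_comm _ ρ, ← Finset.mul_sum, mul_add_one, Finset.sum_add_distrib, hwf]
    rw [zero_add, mul_comm]
  exact le_of_mul_le_mul_left (by rwa [hleft, hright] at weighted) hw_pos

end Asymmetry

section Interpolation

variable {P K : Set E2}

lemma isConvexBody_inter_smul (hP : IsConvexBody P) (hK : IsConvexBody K) (hK0 : 0 ∈ K)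
    (hKP : K ⊆ P) {t : ℝ} (ht : 1 ≤ t) : IsConvexBody (P ∩ t • K) := by
  have hKt : K ⊆ t • K := by
    simpa only [one_smul] using smul_subset_smul_of_convex hK.1 hK0 zero_le_one ht
  exact ⟨hP.1.inter (hK.1.smul t), hP.2.1.inter (hK.2.1.smul t),
    hK.2.2.mono (interior_mono (subset_inter hKP hKt))⟩

lemma continuousOn_tauB_inter_smul (hP : Convex ℝ P) (hP0 : 0 ∈ P) (hK : Convex ℝ K)
    (hK0 : 0 ∈ K) : ContinuousOn (fun t : ℝ => tauB (P ∩ t • K)) (Ici 1) := by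
  refine (LipschitzOnWith.of_le_add fun x (hx : 1 ≤ x) y (hy : 1 ≤ y) => ?_).continuousOn
  have dilate {a b q : ℝ} (ha : 1 ≤ a) (hq : 1 ≤ q) (hab : a ≤ q * b) :
      P ∩ a • K ⊆ q • (P ∩ b • K) :=
    inter_smul_subset_smul_inter_smul hP hP0 hK hK0 hq (by linarith) hab
  have ratio_sub_one_le {a b : ℝ} (ha : 1 ≤ a) (hab : a ≤ b) : b / a - 1 ≤ b - a := by
    rw [div_sub_one (by positivity)]
    exact div_le_self (sub_nonneg.2 hab) ha
  have hτ := tauB_le_one (P ∩ y • K)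
  rcases le_total x y with hxy | hyx
  · have hq : 1 ≤ y / x := (one_le_div (by positivity)).2 hxy
    have hτxy := tauB_le_mul_tauB one_pos (one_pos.trans_le hq)
      (dilate hx le_rfl (by simpa using hxy))
      (dilate hy hq (div_mul_cancel₀ y (by positivity)).ge)
    have := ratio_sub_one_le hx hxy
    rw [Real.dist_eq, abs_sub_comm, abs_of_nonneg (sub_nonneg.2 hxy)]
    nlinarith
  · have hq : 1 ≤ x / y := (one_le_div (by positivity)).2 hyx
    have hτxy := tauB_le_mul_tauB (one_pos.trans_le hq) one_pos
      (dilate hx hq (div_mul_cancel₀ x (by positivity)).ge)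
      (dilate hy le_rfl (by simpa using hyx))
    have := ratio_sub_one_le hy hyx
    rw [Real.dist_eq, abs_of_nonneg (sub_nonneg.2 hyx)]
    nlinarith

lemma exists_one_le_subset_smul {E : Type*} [SeminormedAddCommGroup E] [NormedSpace ℝ E]
    {A B : Set E} (hA : A ∈ nhds 0) (hB : Bornology.IsBounded B) :
    ∃ T : ℝ, 1 ≤ T ∧ B ⊆ T • A := by
  obtain ⟨r, -, hr⟩ := (NormedSpace.isVonNBounded_of_isBounded ℝ hB hA).exists_pos
  refine ⟨max 1 r, le_max_left _ _, hr _ ?_⟩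
  exact (le_max_right 1 r).trans (le_abs_self _)

/-- The pair `(τ, s)` is attained as `(τ(K), s(K))` by a planar Minkowski centered convex body. -/
def IsAttained (τ s : ℝ) : Prop :=
  ∃ K : Set E2, IsConvexBody K ∧ MinkCentered K ∧ minkAsym K = s ∧ tauB K = τ

lemma isAttained_of_mem_Icc_tauB {s τ : ℝ} (hs : s ≠ 0) (hP : IsConvexBody P)
    (hK : IsConvexBody K) (hK0 : K ∈ nhds 0) (hKP : K ⊆ P) (hPs : P ⊆ s • (-P))
    (hKs : K ⊆ s • (-K))
    (hasym : ∀ L, K ⊆ L → L ⊆ P → L ⊆ s • (-L) → minkAsym L = s)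
    (hτ : τ ∈ Icc (tauB P) (tauB K)) : IsAttained τ s := by
  have h0K : (0 : E2) ∈ K := mem_of_mem_nhds hK0
  obtain ⟨T, hT, hPT⟩ := exists_one_le_subset_smul hK0 hP.2.1.isBounded
  have hcont : ContinuousOn (fun t : ℝ => tauB (P ∩ t • K)) (Icc 1 T) :=
    (continuousOn_tauB_inter_smul hP.1 (hKP h0K) hK.1 h0K).mono Icc_subset_Ici_self
  obtain ⟨t, ht, rfl⟩ := intermediate_value_Icc' hT hcont
    (by simpa only [one_smul, inter_eq_right.2 hKP, inter_eq_left.2 hPT] using hτ)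
  have hKt : K ⊆ P ∩ t • K := subset_inter hKP <| by
    simpa only [one_smul] using smul_subset_smul_of_convex hK.1 h0K zero_le_one ht.1
  have hsym : P ∩ t • K ⊆ s • (-(P ∩ t • K)) :=
    inter_subset_smul_neg_inter hs hPs (smul_subset_smul_neg_smul hKs t)
  have hs_eq := hasym _ hKt inter_subset_left hsym
  exact ⟨P ∩ t • K, isConvexBody_inter_smul hP hK h0K hKP ht.1,
    by rwa [MinkCentered, hs_eq], hs_eq, rfl⟩

end Interpolation

section BalancedCoordinates

lemma mul_add_one_le_sum {ι : Type*} [Fintype ι] {w y : ι → ℝ} (hw : ∀ i, 0 ≤ w i)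
    (hwy : ∑ i, w i * y i = 0) (hy : ∀ i, -1 ≤ y i) (i : ι) : w i * (y i + 1) ≤ ∑ j, w j :=
  calc w i * (y i + 1) ≤ ∑ j, w j * (y j + 1) :=
        Finset.single_le_sum (f := fun j => w j * (y j + 1))
          (fun j _ => mul_nonneg (hw j) (by linarith [hy j])) (Finset.mem_univ i)
    _ = ∑ j, w j := by
        simp only [mul_add_one, Finset.sum_add_distrib, hwy, zero_add]

-- Three numbers with sum zero have at most one positive or at most one negative among them.
lemma sum_posPart_le_of_sum_eq_zero {y : Fin 3 → ℝ} {c : ℝ} (hy : ∑ i, y i = 0)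
    (hc : ∀ i, |y i| ≤ c) : ∑ i, (y i)⁺ ≤ c := by
  have h0 := abs_le.1 (hc 0)
  have h1 := abs_le.1 (hc 1)
  have h2 := abs_le.1 (hc 2)
  simp only [Fin.sum_univ_three, posPart_def] at hy ⊢
  rcases max_cases (y 0) 0 with ⟨e0, -⟩ | ⟨e0, -⟩ <;>
    rcases max_cases (y 1) 0 with ⟨e1, -⟩ | ⟨e1, -⟩ <;>
    rcases max_cases (y 2) 0 with ⟨e2, -⟩ | ⟨e2, -⟩ <;>
    simp only [e0, e1, e2] <;> linarith

lemma exists_mem_Icc_sum_mul_eq_zero {ι : Type*} [Fintype ι] {w lo hi : ι → ℝ} (h : lo ≤ hi)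
    (hlo : ∑ i, w i * lo i ≤ 0) (hhi : 0 ≤ ∑ i, w i * hi i) :
    ∃ k ∈ Icc lo hi, ∑ i, w i * k i = 0 :=
  (convex_Icc lo hi).isPreconnected.intermediate_value (left_mem_Icc.2 h) (right_mem_Icc.2 h)
    (by fun_prop : Continuous fun k : ι → ℝ => ∑ i, w i * k i).continuousOn ⟨hlo, hhi⟩

lemma exists_balanced_sub_mem_Icc {w y : Fin 3 → ℝ} {s : ℝ} (hs : 1 ≤ s) (hw : ∀ i, 0 ≤ w i)
    (hws : ∀ i, w i * (s + 1) ≤ ∑ j, w j) (hwy : ∑ i, w i * y i = 0)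
    (hy : ∀ i, |y i| ≤ s + 1) :
    ∃ k : Fin 3 → ℝ, ∑ i, w i * k i = 0 ∧
      ∀ i, k i ∈ Icc (-1) s ∧ k i - y i ∈ Icc (-1) s := by
  have hpos : ∑ i, w i * (y i)⁺ ≤ ∑ i, w i := by
    have := sum_posPart_le_of_sum_eq_zero hwy fun i =>
      calc |w i * y i| = w i * |y i| := by rw [abs_mul, abs_of_nonneg (hw i)]
        _ ≤ w i * (s + 1) := mul_le_mul_of_nonneg_left (hy i) (hw i)
        _ ≤ ∑ j, w j := hws i
    simpa only [posPart_def, mul_max_of_nonneg _ _ (hw _), mul_zero] using this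
  have hneg : ∑ i, w i * (y i)⁻ = ∑ i, w i * (y i)⁺ := by
    rw [← sub_eq_zero, ← Finset.sum_sub_distrib, ← neg_eq_zero, ← Finset.sum_neg_distrib, ← hwy]
    refine Finset.sum_congr rfl fun i _ => ?_
    linear_combination w i * posPart_sub_negPart (y i)
  have hsum : 0 ≤ ∑ i, w i := Finset.sum_nonneg fun i _ => hw i
  obtain ⟨k, ⟨hlo, hhi⟩, hk⟩ := exists_mem_Icc_sum_mul_eq_zero (w := w)
    (lo := fun i => (y i)⁺ - 1) (hi := fun i => s - (y i)⁻)
    (fun i => by linarith [hy i, posPart_add_negPart (y i)])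
    (by simpa only [mul_sub, mul_one, Finset.sum_sub_distrib, sub_nonpos] using hpos)
    (by
      simp only [mul_sub, Finset.sum_sub_distrib, ← Finset.sum_mul, hneg]
      nlinarith)
  refine ⟨k, hk, fun i => ?_⟩
  have hki : (y i)⁺ - 1 ≤ k i ∧ k i ≤ s - (y i)⁻ := ⟨hlo i, hhi i⟩
  have := posPart_nonneg (y i)
  have := negPart_nonneg (y i)
  have := posPart_sub_negPart (y i)
  constructor <;> constructor <;> linarith

end BalancedCoordinates

section Strip

variable {E : Type*} [AddCommGroup E] [Module ℝ E] [TopologicalSpace E]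

lemma preimage_Icc_mem_nhds_zero (g : E →L[ℝ] ℝ) {a b : ℝ} (ha : 0 < a) (hb : 0 < b) :
    g ⁻¹' Icc (-a) b ∈ nhds 0 :=
  g.continuous.continuousAt.preimage_mem_nhds <| by
    rw [map_zero]; exact Icc_mem_nhds (neg_lt_zero.2 ha) hb

lemma preimage_Icc_subset_smul_neg (g : E →L[ℝ] ℝ) {s a b : ℝ} (hs : 0 < s) (hab : a ≤ s * b)
    (hba : b ≤ s * a) : g ⁻¹' Icc (-a) b ⊆ s • (-(g ⁻¹' Icc (-a) b)) := by
  rintro x ⟨hxa, hxb⟩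
  rw [mem_smul_set_iff_inv_smul_mem₀ hs.ne', Set.mem_neg, mem_preimage, map_neg, map_smul,
    smul_eq_mul, ← div_eq_inv_mul]
  exact ⟨neg_le_neg ((div_le_iff₀' hs).2 (hxb.trans hba)),
    neg_le.2 ((le_div_iff₀' hs).2 (by linarith))⟩

end Strip

section Hexagon

/-- The linear functional `(x, y) ↦ a x + b y` on the plane. -/
def linForm (a b : ℝ) : E2 →L[ℝ] ℝ :=
  a • EuclideanSpace.proj 0 + b • EuclideanSpace.proj 1

lemma linForm_pt (a b x y : ℝ) : linForm a b (pt x y) = a * x + b * y := rfl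

/-- The three functionals `x`, `y`, `-(l₁ x + l₂ y)` bounding the hexagons of the construction.
Up to a linear change of coordinates, these are all triples of functionals with a positive linear
relation. -/
def edgeForm (l₁ l₂ : ℝ) : Fin 3 → E2 →L[ℝ] ℝ :=
  ![linForm 1 0, linForm 0 1, linForm (-l₁) (-l₂)]

/-- The coefficients of the linear relation between the functionals `edgeForm l₁ l₂`. -/
def edgeWeight (l₁ l₂ : ℝ) : Fin 3 → ℝ := ![l₁, l₂, 1]

/-- The hexagon `T ∩ (-s • T)`, where `T` is the triangle on which all of the functionals
`edgeForm l₁ l₂` are at least `-1`. -/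
def hexagon (s l₁ l₂ : ℝ) : Set E2 := ⋂ i, edgeForm l₁ l₂ i ⁻¹' Icc (-1) s

variable {s l₁ l₂ : ℝ}

lemma edgeWeight_nonneg (hl₁ : 0 ≤ l₁) (hl₂ : 0 ≤ l₂) (i : Fin 3) : 0 ≤ edgeWeight l₁ l₂ i := by
  fin_cases i
  exacts [hl₁, hl₂, zero_le_one]

lemma sum_edgeWeight_pos (hl₁ : 0 ≤ l₁) (hl₂ : 0 ≤ l₂) : 0 < ∑ i, edgeWeight l₁ l₂ i :=
  Finset.sum_pos' (fun i _ => edgeWeight_nonneg hl₁ hl₂ i) ⟨2, Finset.mem_univ 2, one_pos⟩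

lemma sum_edgeWeight_mul_edgeForm (x : E2) :
    ∑ i, edgeWeight l₁ l₂ i * edgeForm l₁ l₂ i x = 0 := by
  simp [Fin.sum_univ_three, edgeWeight, edgeForm, linForm, ← neg_add, -neg_add_rev]

lemma edgeForm_pt_of_sum_eq_zero {k : Fin 3 → ℝ} (hk : ∑ i, edgeWeight l₁ l₂ i * k i = 0)
    (i : Fin 3) : edgeForm l₁ l₂ i (pt (k 0) (k 1)) = k i := by
  simp only [Fin.sum_univ_three, edgeWeight, Matrix.cons_val] at hk
  fin_cases i <;> simp only [edgeForm, Fin.reduceFinMk, Matrix.cons_val, linForm_pt] <;> linarith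

lemma pt_mem_hexagon_iff {x y : ℝ} :
    pt x y ∈ hexagon s l₁ l₂ ↔
      x ∈ Icc (-1) s ∧ y ∈ Icc (-1) s ∧ -(l₁ * x + l₂ * y) ∈ Icc (-1) s := by
  simp [hexagon, edgeForm, Fin.forall_fin_succ, linForm_pt, add_comm, -mem_Icc]

lemma convex_hexagon : Convex ℝ (hexagon s l₁ l₂) :=
  convex_iInter fun i => (convex_Icc _ _).is_linear_preimage (edgeForm l₁ l₂ i).isLinear

lemma isCompact_hexagon : IsCompact (hexagon s l₁ l₂) := by
  have hclosed : IsClosed (hexagon s l₁ l₂) :=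
    isClosed_iInter fun i => isClosed_Icc.preimage (edgeForm l₁ l₂ i).continuous
  have hbox : IsCompact (EuclideanSpace.equiv (Fin 2) ℝ ⁻¹' Icc (fun _ => -1) (fun _ => s)) :=
    (EuclideanSpace.equiv (Fin 2) ℝ).toHomeomorph.isCompact_preimage.2 isCompact_Icc
  refine hbox.of_isClosed_subset hclosed fun x hx => ?_
  have h0 : x 0 ∈ Icc (-1) s := by simpa [edgeForm, linForm] using mem_iInter.1 hx 0
  have h1 : x 1 ∈ Icc (-1) s := by simpa [edgeForm, linForm] using mem_iInter.1 hx 1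
  constructor <;> intro i <;> fin_cases i
  exacts [h0.1, h1.1, h0.2, h1.2]

lemma hexagon_mem_nhds_zero (hs : 0 < s) : hexagon s l₁ l₂ ∈ nhds 0 :=
  Filter.iInter_mem.2 fun i => preimage_Icc_mem_nhds_zero (edgeForm l₁ l₂ i) one_pos hs

lemma hexagon_subset_smul_neg (hs : 1 ≤ s) : hexagon s l₁ l₂ ⊆ s • (-hexagon s l₁ l₂) :=
  iInter_subset_smul_neg_iInter (by positivity) fun i =>
    preimage_Icc_subset_smul_neg _ (by positivity) (by nlinarith) (by linarith)

-- If the hexagon meets all three edges of `-s • T`, then `P - P` is the whole hexagon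
-- `|edgeForm l₁ l₂ i| ≤ s + 1`, which is `s + 1` times `P ∩ (-P)`.
lemma tauB_hexagon_le (hs : 1 ≤ s) (hl₁ : 0 ≤ l₁) (hl₂ : 0 ≤ l₂)
    (hp : ∀ i, ∃ p ∈ hexagon s l₁ l₂, edgeForm l₁ l₂ i p = s) :
    tauB (hexagon s l₁ l₂) ≤ 2 / (s + 1) := by
  have hw := edgeWeight_nonneg hl₁ hl₂
  have hws (i : Fin 3) : edgeWeight l₁ l₂ i * (s + 1) ≤ ∑ j, edgeWeight l₁ l₂ j := by
    obtain ⟨p, hp, hps⟩ := hp i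
    simpa only [hps] using
      mul_add_one_le_sum hw (sum_edgeWeight_mul_edgeForm p) (fun j => (mem_iInter.1 hp j).1) i
  refine tauB_le (by positivity) ?_
  rintro x ⟨hx, hx'⟩
  have hx_abs (i : Fin 3) : |edgeForm l₁ l₂ i ((s + 1) • x)| ≤ s + 1 := by
    have h1 : -1 ≤ edgeForm l₁ l₂ i x := (mem_iInter.1 hx i).1
    have h2 : -1 ≤ edgeForm l₁ l₂ i (-x) := (mem_iInter.1 hx' i).1
    rw [map_neg, neg_le_neg_iff] at h2
    rw [map_smul, smul_eq_mul, abs_mul, abs_of_pos (by positivity)]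
    exact mul_le_of_le_one_right (by positivity) (abs_le.2 ⟨h1, h2⟩)
  obtain ⟨k, hk0, hk⟩ :=
    exists_balanced_sub_mem_Icc hs hw hws (sum_edgeWeight_mul_edgeForm _) hx_abs
  have hform := edgeForm_pt_of_sum_eq_zero hk0
  refine mem_smul_half_sub_iff.2 ⟨pt (k 0) (k 1), mem_iInter.2 fun i => ?_,
    pt (k 0) (k 1) - (s + 1) • x, mem_iInter.2 fun i => ?_, ?_⟩
  · rw [mem_preimage, hform]
    exact (hk i).1
  · rw [mem_preimage, map_sub, hform]
    exact (hk i).2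
  · have hscale : 2 / (s + 1) / 2 * (s + 1) = 1 := by field_simp
    rw [sub_sub_cancel, smul_smul, hscale, one_smul]

lemma isAttained_of_hexagon_inter_strip {α β τ : ℝ} (hs : 1 ≤ s) (hl₁ : 0 ≤ l₁) (hl₂ : 0 ≤ l₂)
    (g : E2 →L[ℝ] ℝ) (hα : 0 < α) (hβ : 0 < β) (hβα : β ≤ s * α) (hαβ : α ≤ s * β)
    (hp : ∀ i, ∃ p ∈ hexagon s l₁ l₂ ∩ g ⁻¹' Icc (-β) α, edgeForm l₁ l₂ i p = s) {z : E2}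
    (hz : z ∈ hexagon s l₁ l₂ ∩ g ⁻¹' Icc (-β) α)
    (hz' : -z ∈ hexagon s l₁ l₂ ∩ g ⁻¹' Icc (-β) α)
    (hτ : 2 / (s + 1) ≤ τ) (hτ' : τ ≤ 2 * g z / (α + β)) : IsAttained τ s := by
  have hs0 : 0 < s := by positivity
  have hP0 : hexagon s l₁ l₂ ∈ nhds 0 := hexagon_mem_nhds_zero hs0
  have hK0 := Filter.inter_mem hP0 (preimage_Icc_mem_nhds_zero g hβ hα)
  have hconv : Convex ℝ (g ⁻¹' Icc (-β) α) := (convex_Icc _ _).is_linear_preimage g.isLinear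
  have hclosed : IsClosed (g ⁻¹' Icc (-β) α) := isClosed_Icc.preimage g.continuous
  refine isAttained_of_mem_Icc_tauB hs0.ne'
    ⟨convex_hexagon, isCompact_hexagon, 0, mem_interior_iff_mem_nhds.2 hP0⟩
    ⟨convex_hexagon.inter hconv, isCompact_hexagon.inter_right hclosed, 0,
      mem_interior_iff_mem_nhds.2 hK0⟩
    hK0 inter_subset_left (hexagon_subset_smul_neg hs)
    (inter_subset_smul_neg_inter hs0.ne' (hexagon_subset_smul_neg hs)
      (preimage_Icc_subset_smul_neg g hs0 hβα hαβ))
    (fun L hKL hLP hL => ?_) ⟨?_, ?_⟩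
  · exact minkAsym_eq_of_touching hs0 hL (edgeForm l₁ l₂) (edgeWeight l₁ l₂)
      (edgeWeight_nonneg hl₁ hl₂) (sum_edgeWeight_pos hl₁ hl₂) sum_edgeWeight_mul_edgeForm
      (fun i x hx => (mem_iInter.1 (hLP hx) i).1)
      (fun i => (hp i).imp fun p hp => ⟨hKL hp.1, hp.2⟩)
  · exact (tauB_hexagon_le hs hl₁ hl₂ fun i => (hp i).imp fun p hp => ⟨hp.1.1, hp.2⟩).trans hτ
  · exact hτ'.trans (two_mul_div_le_tauB g (by positivity) inter_subset_right hz hz')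

end Hexagon

section AtMostGoldenRatio

variable {s τ : ℝ}

lemma neg_pt (x y : ℝ) : -pt x y = pt (-x) (-y) := by
  ext i
  fin_cases i <;> rfl

lemma exists_edgeForm_eq_of_pt {K : Set E2} {l₁ l₂ x₁ y₀ x₂ y₂ : ℝ} (h₀ : pt s y₀ ∈ K)
    (h₁ : pt x₁ s ∈ K) (h₂ : pt x₂ y₂ ∈ K) (h₂' : -(l₁ * x₂ + l₂ * y₂) = s) (i : Fin 3) :
    ∃ p ∈ K, edgeForm l₁ l₂ i p = s := by
  fin_cases i
  · exact ⟨_, h₀, by simp [edgeForm, linForm_pt]⟩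
  · exact ⟨_, h₁, by simp [edgeForm, linForm_pt]⟩
  · exact ⟨_, h₂, by simp [← h₂', edgeForm, linForm_pt, add_comm]⟩

lemma pt_mem_hexagon_inter_strip_iff {l₁ l₂ a b x y α β : ℝ} :
    pt x y ∈ hexagon s l₁ l₂ ∩ linForm a b ⁻¹' Icc (-β) α ↔
      (x ∈ Icc (-1) s ∧ y ∈ Icc (-1) s ∧ -(l₁ * x + l₂ * y) ∈ Icc (-1) s) ∧
        a * x + b * y ∈ Icc (-β) α := by
  rw [mem_inter_iff, pt_mem_hexagon_iff, mem_preimage, linForm_pt]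

lemma isAttained_of_sq_le_add_one (hs : 1 ≤ s) (hφ : s ^ 2 ≤ s + 1) (hτ : 2 / (s + 1) ≤ τ)
    (hτ' : τ ≤ 1) : IsAttained τ s := by
  have h1s : 1 / s * s = 1 := by field_simp
  have h2s : 2 / s * s = 2 := by field_simp
  have h1x : 1 / s * -(s * (s - 1)) = 1 - s := by field_simp; ring
  have h2x : 2 / s * -(s * (s - 1)) = 2 * (1 - s) := by field_simp; ring
  refine isAttained_of_hexagon_inter_strip (l₁ := 2 / s) (l₂ := 1) (z := pt 0 1) hs (by positivity)
    zero_le_one (linForm (1 / s) 1) one_pos one_pos (by linarith) (by linarith)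
    (exists_edgeForm_eq_of_pt (y₀ := -1) (x₁ := -(s * (s - 1))) (x₂ := -(s * (s - 1)))
      (y₂ := s - 2) ?_ ?_ ?_ (by rw [h2x]; ring))
    ?_ ?_ hτ (hτ'.trans_eq (by norm_num [linForm_pt]))
  all_goals simp only [neg_pt, pt_mem_hexagon_inter_strip_iff, mem_Icc, h1s, h2s, h1x, h2x]
  all_goals refine ⟨⟨⟨?_, ?_⟩, ⟨?_, ?_⟩, ⟨?_, ?_⟩⟩, ⟨?_, ?_⟩⟩ <;> nlinarith

end AtMostGoldenRatio

section CutHexagon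

/-- The coefficient in `stripForm` for which that functional equals `1` at `(1, (2 - s L) / L)`. -/
def stripSlope (s L : ℝ) : ℝ := (L * (1 + s) - 2) / (L * (1 + s ^ 2) - 2 * s)

/-- The functional taking the value `-1` at both `((L - s) / (s L - 1), -1)` and
`-(1, (2 - s L) / L)`; the first point lies on an edge of `hexagon s (s L - 1) L`, and the second
is a vertex of `hexagon s (s L - 1) L ∩ -hexagon s (s L - 1) L`. -/
def stripForm (s L : ℝ) : E2 →L[ℝ] ℝ :=
  linForm ((s * L - 1) * stripSlope s L) (1 + (L - s) * stripSlope s L)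

/-- The width of the strip `-1 ≤ stripForm s L ≤ stripForm s L (s, -1)`. -/
def stripWidth (s L : ℝ) : ℝ := (s ^ 2 - 1) * L * stripSlope s L

variable {s L τ : ℝ}

lemma stripForm_pt_right : stripForm s L (pt s (-1)) = stripWidth s L - 1 := by
  rw [stripForm, linForm_pt, stripWidth]
  ring

lemma stripForm_pt_top (hL : L ≠ 0) :
    stripForm s L (pt (-1) s) = s - stripWidth s L / L := by
  rw [stripForm, linForm_pt, stripWidth]
  field_simp
  ring

lemma stripForm_pt_bottom (hL : s * L - 1 ≠ 0) :
    stripForm s L (pt ((L - s) / (s * L - 1)) (-1)) = -1 := by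
  rw [stripForm, linForm_pt]
  field_simp
  ring

lemma stripForm_pt_corner (hL : L ≠ 0) (hD : L * (1 + s ^ 2) - 2 * s ≠ 0) :
    stripForm s L (pt 1 ((2 - s * L) / L)) = 1 := by
  have hslope : stripSlope s L * (L * (1 + s ^ 2) - 2 * s) = L * (1 + s) - 2 :=
    div_mul_cancel₀ _ hD
  rw [stripForm, linForm_pt]
  field_simp
  linear_combination hslope

lemma two_le_stripWidth (hs : 1 < s) (hφ : s + 1 ≤ s ^ 2) (hL : 1 ≤ L) :
    2 ≤ stripWidth s L := by
  have hD : 0 < L * (1 + s ^ 2) - 2 * s := by nlinarith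
  have hs' : 0 < (s ^ 2 - 1) * (1 + s) := mul_pos (by nlinarith) (by linarith)
  have hsq : (s ^ 2 - 1) * (1 + s) *
      ((s ^ 2 - 1) * L * (L * (1 + s) - 2) - 2 * (L * (1 + s ^ 2) - 2 * s)) =
      ((s ^ 2 - 1) * (1 + s) * L - 2 * s ^ 2) ^ 2 + 4 * s * (s ^ 2 - (s + 1)) := by ring
  rw [stripWidth, stripSlope, ← mul_div_assoc, le_div_iff₀ hD]
  exact sub_nonneg.1 (nonneg_of_mul_nonneg_right 
    (hsq ▸ add_nonneg (sq_nonneg _) (mul_nonneg (by linarith) (sub_nonneg.2 hφ))) hs')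

/-- The part of the hexagon in the strip of `stripForm s L`. It contains `±(1, (2 - s L) / L)`,
which forces `tauB (cutHexagon s L)` to be at least `2 / stripWidth s L`. -/
def cutHexagon (s L : ℝ) : Set E2 :=
  hexagon s (s * L - 1) L ∩ stripForm s L ⁻¹' Icc (-1) (stripWidth s L - 1)

lemma pt_mem_cutHexagon_iff {x y : ℝ} :
    pt x y ∈ cutHexagon s L ↔
      (x ∈ Icc (-1) s ∧ y ∈ Icc (-1) s ∧ -((s * L - 1) * x + L * y) ∈ Icc (-1) s) ∧
        stripForm s L (pt x y) ∈ Icc (-1) (stripWidth s L - 1) := by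
  rw [cutHexagon, mem_inter_iff, pt_mem_hexagon_iff, mem_preimage]

lemma pt_right_mem_cutHexagon (hs : 1 < s) (hL : 0 ≤ L) (hLs : L * (s - 1) ≤ 1)
    (hw : 0 ≤ stripWidth s L) : pt s (-1) ∈ cutHexagon s L := by
  rw [pt_mem_cutHexagon_iff, stripForm_pt_right]
  refine ⟨⟨⟨?_, ?_⟩, ⟨?_, ?_⟩, ⟨?_, ?_⟩⟩, ⟨?_, ?_⟩⟩ <;>
    nlinarith [mul_nonneg hL (sub_nonneg.2 hs.le)]

lemma pt_top_mem_cutHexagon (hs : 1 < s) (hL : 1 ≤ L) (hLs : L * (s - 1) ≤ 1)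
    (hw : 2 ≤ stripWidth s L) (hw' : stripWidth s L ≤ s + 1) : pt (-1) s ∈ cutHexagon s L := by
  have hL0 : 0 < L := by positivity
  have hwL : stripWidth s L / L ≤ s + 1 := (div_le_self (by linarith) hL).trans hw'
  have hwL' : stripWidth s L * (s - 1) ≤ stripWidth s L / L := by
    rw [le_div_iff₀ hL0]
    nlinarith
  rw [pt_mem_cutHexagon_iff, stripForm_pt_top hL0.ne']
  refine ⟨⟨⟨?_, ?_⟩, ⟨?_, ?_⟩, ⟨?_, ?_⟩⟩, ⟨?_, ?_⟩⟩ <;> nlinarith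

lemma pt_bottom_mem_cutHexagon (hs : 1 < s) (hL : 1 ≤ L) (hw : 0 ≤ stripWidth s L) :
    pt ((L - s) / (s * L - 1)) (-1) ∈ cutHexagon s L := by
  have hl₁ : 0 < s * L - 1 := by nlinarith
  have hx : (L - s) / (s * L - 1) ∈ Icc (-1) s := by
    rw [mem_Icc, le_div_iff₀ hl₁, div_le_iff₀ hl₁]
    constructor <;> nlinarith
  rw [pt_mem_cutHexagon_iff, stripForm_pt_bottom hl₁.ne', mul_div_cancel₀ _ hl₁.ne']
  refine ⟨⟨hx, ⟨?_, ?_⟩, ⟨?_, ?_⟩⟩, ⟨?_, ?_⟩⟩ <;> linarith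

lemma pt_corner_mem_cutHexagon (hs : 1 < s) (hL : 1 ≤ L) (hLs : L * (s - 1) ≤ 1)
    (hw : 2 ≤ stripWidth s L) :
    pt 1 ((2 - s * L) / L) ∈ cutHexagon s L ∧ -pt 1 ((2 - s * L) / L) ∈ cutHexagon s L := by
  have hL0 : 0 < L := by positivity
  have hD : 0 < L * (1 + s ^ 2) - 2 * s := by nlinarith
  have hy : -1 ≤ (2 - s * L) / L ∧ (2 - s * L) / L ≤ 1 := by
    rw [le_div_iff₀ hL0, div_le_iff₀ hL0]
    constructor <;> nlinarith
  have hg := stripForm_pt_corner hL0.ne' hD.ne'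
  have hg' := (stripForm s L).map_neg (pt 1 ((2 - s * L) / L))
  rw [hg, neg_pt] at hg'
  rw [neg_pt, pt_mem_cutHexagon_iff, pt_mem_cutHexagon_iff, hg, hg', mul_neg L,
    mul_div_cancel₀ _ hL0.ne']
  refine ⟨⟨⟨⟨?_, ?_⟩, ⟨?_, ?_⟩, ⟨?_, ?_⟩⟩, ⟨?_, ?_⟩⟩,
    ⟨⟨⟨?_, ?_⟩, ⟨?_, ?_⟩, ⟨?_, ?_⟩⟩, ⟨?_, ?_⟩⟩⟩ <;> linarith

lemma isAttained_of_le_two_div_stripWidth (hs : 1 < s) (hφ : s + 1 ≤ s ^ 2) (hL : 1 ≤ L)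
    (hLs : L * (s - 1) ≤ 1) (hτ : 2 / (s + 1) ≤ τ) (hτ' : τ ≤ 2 / stripWidth s L) :
    IsAttained τ s := by
  have hL0 : 0 < L := by positivity
  have hD : 0 < L * (1 + s ^ 2) - 2 * s := by nlinarith
  have hl₁ : 0 < s * L - 1 := by nlinarith
  have hw := two_le_stripWidth hs hφ hL
  have hw' : stripWidth s L ≤ s + 1 :=
    (div_le_div_iff_of_pos_left two_pos (by linarith) (by linarith)).1 (hτ.trans hτ')
  obtain ⟨hz, hz'⟩ := pt_corner_mem_cutHexagon hs hL hLs hw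
  refine isAttained_of_hexagon_inter_strip hs.le hl₁.le hL0.le (stripForm s L)
    (by linarith) one_pos (by nlinarith) (by linarith)
    (exists_edgeForm_eq_of_pt (pt_right_mem_cutHexagon hs hL0.le hLs (by linarith))
      (pt_top_mem_cutHexagon hs hL hLs hw hw') (pt_bottom_mem_cutHexagon hs hL (by linarith)) ?_)
    hz hz' hτ ?_
  · rw [mul_div_cancel₀ _ hl₁.ne']
    ring
  · rwa [stripForm_pt_corner hL0.ne' hD.ne', mul_one, sub_add_cancel]

end CutHexagon

section CriticalParameter

variable {s : ℝ}

/-- The value of `L` minimizing `stripWidth s L` over the range `2 s < L (1 + s ^ 2)`. -/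
def criticalL (s : ℝ) : ℝ :=
  2 * (s * (s + 1) + √(s * (s ^ 2 - 1))) / ((s + 1) * (1 + s ^ 2))

lemma two_div_stripWidth (s L : ℝ) :
    2 / stripWidth s L =
      2 * (L * (1 + s ^ 2) - 2 * s) / ((s ^ 2 - 1) * L * (L * (1 + s) - 2)) := by
  rw [stripWidth, stripSlope, ← mul_div_assoc, div_div_eq_mul_div]

lemma two_div_stripWidth_one_div (hs : 1 < s) : 2 / stripWidth s (1 / (s - 1)) = cExpr3 s := by
  have hs' : s - 1 ≠ 0 := (sub_pos.2 hs).ne'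
  have hnum : 2 * (1 / (s - 1) * (1 + s ^ 2) - 2 * s) = -(2 * (s ^ 2 - 2 * s - 1)) / (s - 1) := by
    field_simp
    ring
  have hden : (s ^ 2 - 1) * (1 / (s - 1)) * (1 / (s - 1) * (1 + s) - 2) =
      -((s - 3) * (s + 1)) / (s - 1) := by
    field_simp
    ring
  rw [two_div_stripWidth, hnum, hden, div_div_div_cancel_right₀ hs', neg_div_neg_eq, cExpr3]

lemma two_div_stripWidth_criticalL (hs : 1 < s) : 2 / stripWidth s (criticalL s) = cExpr2 s := by
  have hr : 0 < √(s * (s ^ 2 - 1)) := Real.sqrt_pos.2 (mul_pos (by linarith) (by nlinarith))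
  have hr2 : √(s * (s ^ 2 - 1)) ^ 2 = s * (s ^ 2 - 1) := Real.sq_sqrt (by nlinarith)
  rw [two_div_stripWidth, cExpr2, criticalL]
  generalize √(s * (s ^ 2 - 1)) = r at hr hr2 ⊢
  set L := 2 * (s * (s + 1) + r) / ((s + 1) * (1 + s ^ 2)) with hL
  have hD : L * (1 + s ^ 2) - 2 * s = 2 * r / (s + 1) := by
    rw [hL]
    field_simp
    ring
  have hLN : L * (L * (1 + s) - 2) =
      4 * r * (s ^ 2 + 2 * s - 1 + 2 * r) / ((s + 1) * (1 + s ^ 2) ^ 2) := by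
    rw [hL]
    field_simp
    linear_combination -4 * (s + 1) * hr2
  have hs' : 0 < s ^ 2 - 1 := by nlinarith
  rw [mul_assoc, hLN, hD]
  field_simp
  ring

lemma phiR_sq : phiR ^ 2 = phiR + 1 := Real.goldenRatio_sq

lemma one_lt_phiR : 1 < phiR := Real.one_lt_goldenRatio

lemma sq_le_add_one_of_le_phiR (hs : 1 ≤ s) (h : s ≤ phiR) : s ^ 2 ≤ s + 1 := by
  nlinarith [phiR_sq]

lemma add_one_le_sq_of_phiR_le (h : phiR ≤ s) : s + 1 ≤ s ^ 2 := by
  nlinarith [phiR_sq, one_lt_phiR]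

lemma one_le_criticalL (hs : phiR ≤ s) (hs2 : s ≤ 2) : 1 ≤ criticalL s := by
  have hs1 : 1 < s := one_lt_phiR.trans_le hs
  have hr : s ≤ √(s * (s ^ 2 - 1)) :=
    Real.le_sqrt_of_sq_le (by nlinarith [add_one_le_sq_of_phiR_le hs])
  rw [criticalL, one_le_div (by positivity)]
  nlinarith [mul_nonneg (sub_nonneg.2 hs2) (sq_nonneg s)]

lemma continuousOn_criticalL : ContinuousOn criticalL (Ioi 0) := by
  refine ContinuousOn.div (by fun_prop) (by fun_prop) fun s hs => ?_
  have : 0 < s := hs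
  positivity

lemma criticalL_phiR : criticalL phiR = 2 / phiR := by
  have hφ := one_lt_phiR
  have hr : √(phiR * (phiR ^ 2 - 1)) = phiR := by
    rw [phiR_sq, add_sub_cancel_right, Real.sqrt_mul_self (by linarith)]
  rw [criticalL, hr, div_eq_div_iff (by positivity) (by positivity)]
  linear_combination 2 * phiR_sq

lemma sHat_le_of_eq (h : phiR < s) (hs2 : s < 2) (heq : cExpr2 s = cExpr3 s) : sHat ≤ s :=
  csInf_le ⟨phiR, fun _ hx => hx.1.le⟩ ⟨h, hs2, heq⟩

-- `cExpr2` and `cExpr3` are the values of `2 / stripWidth s L` at `criticalL s` and `1 / (s - 1)`,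
-- so they agree wherever `criticalL s` reaches the upper end of the admissible range of `L`.
lemma criticalL_mul_sub_one_le_one (hs : phiR ≤ s) (hs' : s ≤ sHat) (hs2 : s ≤ 2) :
    criticalL s * (s - 1) ≤ 1 := by
  by_contra! hlt
  have hφ := one_lt_phiR
  have hcont : ContinuousOn (fun x => criticalL x * (x - 1)) (Icc phiR s) :=
    (continuousOn_criticalL.mono fun x hx => by grind).mul (by fun_prop)
  have hstart : criticalL phiR * (phiR - 1) < 1 := by
    rw [criticalL_phiR, div_mul_eq_mul_div, div_lt_one (by positivity)]
    nlinarith [phiR_sq]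
  obtain ⟨x, ⟨hφx, hxs⟩, hx⟩ := intermediate_value_Ioo hs hcont ⟨hstart, hlt⟩
  have hx1 : 1 < x := hφ.trans hφx
  have hcrit : criticalL x = 1 / (x - 1) := eq_one_div_of_mul_eq_one_left hx
  have heq : cExpr2 x = cExpr3 x := by
    rw [← two_div_stripWidth_criticalL hx1, hcrit, two_div_stripWidth_one_div hx1]
  exact (hxs.trans_le hs').not_ge (sHat_le_of_eq hφx (hxs.trans_le hs2) heq)

end CriticalParameter

theorem stmt5 (τ s : ℝ) (hs1 : 1 ≤ s) (hs2 : s ≤ 2)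
    (hτ1 : 2 / (s + 1) ≤ τ) (hτ2 : τ ≤ cFun s) :
    ∃ K : Set E2, IsConvexBody K ∧ MinkCentered K ∧ minkAsym K = s ∧ tauB K = τ := by
  rcases le_or_gt s phiR with hφ | hφ
  · rw [cFun, if_pos hφ] at hτ2
    exact isAttained_of_sq_le_add_one hs1 (sq_le_add_one_of_le_phiR hs1 hφ) hτ1 hτ2
  have hs : 1 < s := one_lt_phiR.trans hφ
  have hsq : s + 1 ≤ s ^ 2 := add_one_le_sq_of_phiR_le hφ.le
  rcases le_or_gt s sHat with hsHat | hsHat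
  · rw [cFun, if_neg hφ.not_ge, if_pos hsHat, ← two_div_stripWidth_criticalL hs] at hτ2
    exact isAttained_of_le_two_div_stripWidth hs hsq (one_le_criticalL hφ.le hs2)
      (criticalL_mul_sub_one_le_one hφ.le hsHat hs2) hτ1 hτ2
  · rw [cFun, if_neg hφ.not_ge, if_neg hsHat.not_ge, ← two_div_stripWidth_one_div hs] at hτ2
    exact isAttained_of_le_two_div_stripWidth hs hsq
      ((one_le_div (by linarith)).2 (by linarith)) (one_div_mul_cancel (by linarith)).le hτ1 hτ2
end
end

section
/- Let K ⊆ ℝ² be a convex body with s(K) > 1. Then K is Minkowski centered (i.e. K ⊆ s(K)·(−K)) if and only if there exist points p¹, p², p³ ∈ bd(K) ∩ (−(1/s(K))·K) and nonzero vectors a¹, a², a³ with ⟨aⁱ, x⟩ ≤ ⟨aⁱ, pⁱ⟩ for all x ∈ K (i = 1,2,3), such that 0 ∈ int(conv{p¹, p², p³}) and 0 ∈ conv{a¹, a², a³}. -/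
open scoped Pointwise RealInnerProductSpace
open Set

noncomputable section

/-!
Work in dimension `n + 1` with `s = s(K) > n`, and consider the unit normals `a` in whose direction
`K ⊆ -sK` is tight, i.e. the outer normals of `K` at points `p` with `-s p ∈ K`. If `K` is centered,
then `0` lies in the convex hull of these contact normals, since otherwise a small translation of
`K` makes the containment strict and `s(K)` could be decreased.

Testing the normal `aᵢ` on `-s pⱼ ∈ K` gives `⟪aᵢ, pⱼ⟫ ≥ -⟪aᵢ, pᵢ⟫ / s`, so a nontrivial nonnegative
combination of at most `n + 1` contact normals has positive inner product with one of the
corresponding contact points, as `n < s`. Hence a positive relation among affinely independent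
contact normals involves `n + 2` of them, and they span. Subtracting a multiple of the relation
writes any `u ≠ 0` with at most `n + 1` nonnegative coefficients, so `⟪u, pⱼ⟫ > 0` for some `j`,
which says that `0` is interior to the convex hull of the contact points.

Conversely, if `c` is a Minkowski center, then every contact normal satisfies `⟪aᵢ, c⟫ ≤ 0`, and the
positive relation among spanning normals forces `c = 0`.
-/

open Filter Finset Metric Module Topology

section OuterNormal

variable {E : Type*} [NormedAddCommGroup E] [InnerProductSpace ℝ E] {K : Set E} {a p q : E}

/-- `a` is an outer normal of a supporting halfspace of `K` at `p`; neither `a ≠ 0` nor `p ∈ K` is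
part of the notion. -/
def IsOuterNormal (K : Set E) (a p : E) : Prop := ∀ x ∈ K, ⟪a, x⟫ ≤ ⟪a, p⟫

lemma IsOuterNormal.inner_lt_of_mem_interior (h : IsOuterNormal K a p) (ha : a ≠ 0)
    (hq : q ∈ interior K) : ⟪a, q⟫ < ⟪a, p⟫ := by
  refine (h q (interior_subset hq)).lt_of_ne fun heq ↦ ha ?_
  have hmax : IsLocalMax (innerSL ℝ a) q := by
    filter_upwards [mem_interior_iff_mem_nhds.1 hq] with x hx
    simpa [heq] using h x hx
  have hzero : innerSL ℝ a = 0 := hmax.hasFDerivAt_eq_zero (innerSL ℝ a).hasFDerivAt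
  simpa using congr($hzero a)

lemma IsOuterNormal.mem_frontier (h : IsOuterNormal K a p) (ha : a ≠ 0) (hp : p ∈ K) :
    p ∈ frontier K :=
  ⟨subset_closure hp, fun hi ↦ (h.inner_lt_of_mem_interior ha hi).false⟩

end OuterNormal

section ConvexHull

variable {E : Type*} [NormedAddCommGroup E] [InnerProductSpace ℝ E]

lemma exists_forall_inner_lt [CompleteSpace E] {C : Set E} {x : E} (hC : Convex ℝ C)
    (hclosed : IsClosed C) (hx : x ∉ C) : ∃ v : E, ∀ y ∈ C, ⟪v, y⟫ < ⟪v, x⟫ := by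
  obtain ⟨f, r, hlt, hr⟩ := geometric_hahn_banach_closed_point hC hclosed hx
  refine ⟨(InnerProductSpace.toDual ℝ E).symm f, fun y hy ↦ ?_⟩
  simpa only [InnerProductSpace.toDual_symm_apply] using (hlt y hy).trans hr

lemma affineSpan_eq_top_of_forall_exists_inner_pos [FiniteDimensional ℝ E] [Nontrivial E]
    {S : Set E} (h : ∀ u : E, u ≠ 0 → ∃ p ∈ S, 0 < ⟪u, p⟫) : affineSpan ℝ S = ⊤ := by
  obtain ⟨v, hv⟩ := exists_ne (0 : E)
  obtain ⟨p₀, hp₀, -⟩ := h v hv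
  rw [AffineSubspace.affineSpan_eq_top_iff_vectorSpan_eq_top_of_nonempty ℝ E E ⟨p₀, hp₀⟩,
    ← Submodule.orthogonal_eq_bot_iff, Submodule.eq_bot_iff]
  intro u hu
  by_contra hu0
  have hconst : ∀ p ∈ S, ⟪u, p⟫ = ⟪u, p₀⟫ := fun p hp ↦ by
    have := Submodule.inner_left_of_mem_orthogonal (vsub_mem_vectorSpan ℝ hp hp₀) hu
    rwa [vsub_eq_sub, inner_sub_right, sub_eq_zero] at this
  obtain ⟨p, hp, hpos⟩ := h u hu0
  obtain ⟨q, hq, hneg⟩ := h (-u) (neg_ne_zero.2 hu0)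
  rw [hconst p hp] at hpos
  rw [inner_neg_left, hconst q hq] at hneg
  linarith

lemma zero_mem_interior_convexHull_of_forall_exists_inner_pos [FiniteDimensional ℝ E]
    [Nontrivial E] {S : Set E} (h : ∀ u : E, u ≠ 0 → ∃ p ∈ S, 0 < ⟪u, p⟫) :
    (0 : E) ∈ interior (convexHull ℝ S) := by
  by_contra h0
  have hne : (interior (convexHull ℝ S)).Nonempty :=
    interior_convexHull_nonempty_iff_affineSpan_eq_top.2
      (affineSpan_eq_top_of_forall_exists_inner_pos h)
  obtain ⟨f, hf, hle⟩ :=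
    geometric_hahn_banach_of_nonempty_interior_point (convex_convexHull ℝ S) h0 hne
  obtain ⟨p, hp, hpos⟩ := h ((InnerProductSpace.toDual ℝ E).symm f) (by simpa using hf)
  have := hle p (subset_convexHull ℝ S hp)
  rw [InnerProductSpace.toDual_symm_apply] at hpos
  rw [map_zero] at this
  linarith

end ConvexHull

section Caratheodory

variable {E : Type*}

lemma card_le_finrank_add_one_of_affineIndependent [AddCommGroup E] [Module ℝ E]
    [FiniteDimensional ℝ E] {ι : Type*} [Fintype ι] {z : ι → E} (hz : AffineIndependent ℝ z) :
    Fintype.card ι ≤ finrank ℝ E + 1 :=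
  hz.card_le_finrank_succ.trans (Nat.succ_le_succ (Submodule.finrank_le _))

lemma convexHull_eq_iUnion_image_stdSimplex [AddCommGroup E] [Module ℝ E]
    [FiniteDimensional ℝ E] (A : Set E) :
    convexHull ℝ A = ⋃ k ∈ Set.Iic (finrank ℝ E + 1),
      (fun y : (Fin k → ℝ) × (Fin k → E) ↦ ∑ i, y.1 i • y.2 i) ''
        (stdSimplex ℝ (Fin k) ×ˢ univ.pi fun _ ↦ A) := by
  apply Set.Subset.antisymm
  · intro x hx
    obtain ⟨ι, _, z, w, hzA, hind, hw, hw1, rfl⟩ := eq_pos_convex_span_of_mem_convexHull hx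
    let e := (Fintype.equivFin ι).symm
    refine mem_iUnion₂.2 ⟨_, card_le_finrank_add_one_of_affineIndependent hind, (w ∘ e, z ∘ e),
      ⟨⟨fun i ↦ (hw _).le, ?_⟩, fun i _ ↦ hzA ⟨_, rfl⟩⟩, e.sum_comp fun i ↦ w i • z i⟩
    exact (e.sum_comp w).trans hw1
  · refine iUnion₂_subset fun k _ ↦ ?_
    rintro _ ⟨⟨w, z⟩, ⟨hw, hz⟩, rfl⟩
    exact (convex_convexHull ℝ A).sum_mem (fun i _ ↦ hw.1 i) hw.2
      fun i _ ↦ subset_convexHull ℝ A (hz i trivial)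

lemma isCompact_convexHull [AddCommGroup E] [Module ℝ E] [TopologicalSpace E] [ContinuousAdd E]
    [ContinuousSMul ℝ E] [FiniteDimensional ℝ E] {A : Set E}
    (hA : IsCompact A) : IsCompact (convexHull ℝ A) := by
  rw [convexHull_eq_iUnion_image_stdSimplex]
  refine (finite_Iic _).isCompact_biUnion fun k _ ↦ IsCompact.image ?_ (by fun_prop)
  exact (isCompact_stdSimplex ℝ (Fin k)).prod (isCompact_univ_pi fun _ ↦ hA)

-- Subtracting the largest admissible multiple of the positive relation kills one coefficient.
lemma exists_nonneg_sum_smul_eq [AddCommGroup E] [Module ℝ E] {ι : Type*} [Fintype ι] [Nonempty ι]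
    {w : ι → ℝ} {z : ι → E} (hw : ∀ i, 0 < w i) (hsum : ∑ i, w i • z i = 0) (ν : ι → ℝ) :
    ∃ i, ∃ μ : ι → ℝ, (∀ j, 0 ≤ μ j) ∧ μ i = 0 ∧ ∑ j, μ j • z j = ∑ j, ν j • z j := by
  obtain ⟨i, hi⟩ := Finite.exists_min fun j ↦ ν j / w j
  refine ⟨i, fun j ↦ ν j - ν i / w i * w j, fun j ↦ ?_, ?_, ?_⟩
  · exact sub_nonneg.2 ((le_div_iff₀ (hw j)).1 (hi j))
  · exact sub_eq_zero.2 (div_mul_cancel₀ _ (hw i).ne').symm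
  · simp only [sub_smul, mul_smul, sum_sub_distrib, ← Finset.smul_sum, hsum, smul_zero, sub_zero]

end Caratheodory

section ContactPair

variable {E : Type*} [NormedAddCommGroup E] [InnerProductSpace ℝ E] {K : Set E} {s : ℝ}

/-- `p` is a boundary point of `K` lying in `-s⁻¹K`, and `a ≠ 0` is an outer normal of `K` at it.
Membership in `-s⁻¹K` is expressed as `-(s • p) ∈ K`, which avoids inverting `s`. -/
structure IsContactPair (K : Set E) (s : ℝ) (a p : E) : Prop where
  ne_zero : a ≠ 0
  mem : p ∈ K
  neg_smul_mem : -(s • p) ∈ K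
  isOuterNormal : IsOuterNormal K a p

lemma mem_neg_inv_smul_iff (hs : s ≠ 0) {p : E} : p ∈ (-s⁻¹) • K ↔ -(s • p) ∈ K := by
  rw [mem_smul_set_iff_inv_smul_mem₀ (neg_ne_zero.2 (inv_ne_zero hs)), inv_neg, inv_inv, neg_smul]

lemma isContactPair_iff (hK : IsClosed K) (hs : s ≠ 0) {a p : E} :
    IsContactPair K s a p ↔ p ∈ frontier K ∩ (-s⁻¹) • K ∧ a ≠ 0 ∧ IsOuterNormal K a p := by
  rw [mem_inter_iff, mem_neg_inv_smul_iff hs]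
  exact ⟨fun ⟨ha, hp, hp', h⟩ ↦ ⟨⟨h.mem_frontier ha hp, hp'⟩, ha, h⟩,
    fun ⟨⟨hp, hp'⟩, ha, h⟩ ↦ ⟨ha, hK.frontier_subset hp, hp', h⟩⟩

namespace IsContactPair

lemma inner_pos {a p : E} (h : IsContactPair K s a p) (h0 : (0 : E) ∈ interior K) :
    0 < ⟪a, p⟫ := by
  simpa using h.isOuterNormal.inner_lt_of_mem_interior h.ne_zero h0

lemma neg_inner_le {a b p q : E} (ha : IsContactPair K s a p) (hb : IsContactPair K s b q) :
    -⟪a, p⟫ ≤ s * ⟪a, q⟫ := by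
  have := ha.isOuterNormal _ hb.neg_smul_mem
  rw [inner_neg_right, real_inner_smul_right] at this
  linarith

variable {ι : Type*} {S : Finset ι} {a p : ι → E}

lemma mul_inner_le_sum_inner (h : ∀ i ∈ S, IsContactPair K s (a i) (p i)) {i : ι} (hi : i ∈ S) :
    (s - (#S - 1)) * ⟪a i, p i⟫ ≤ s * ∑ j ∈ S, ⟪a i, p j⟫ := by
  classical
  have hothers : (#S - 1) * -⟪a i, p i⟫ ≤ ∑ j ∈ S.erase i, s * ⟪a i, p j⟫ := by
    have := card_nsmul_le_sum (S.erase i) (fun j ↦ s * ⟪a i, p j⟫) (-⟪a i, p i⟫)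
      fun j hj ↦ (h i hi).neg_inner_le (h j (mem_of_mem_erase hj))
    rwa [nsmul_eq_mul, cast_card_erase_of_mem hi] at this
  rw [Finset.mul_sum, ← add_sum_erase S _ hi]
  linarith

lemma exists_inner_sum_smul_pos (h0 : (0 : E) ∈ interior K)
    (h : ∀ i ∈ S, IsContactPair K s (a i) (p i)) (hs : #S < s + 1) {μ : ι → ℝ}
    (hμ : ∀ i ∈ S, 0 ≤ μ i) (hpos : ∃ i ∈ S, 0 < μ i) :
    ∃ j ∈ S, 0 < ⟪∑ i ∈ S, μ i • a i, p j⟫ := by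
  obtain ⟨i₀, hi₀, hμi₀⟩ := hpos
  have hcard : (1 : ℝ) ≤ #S := by exact_mod_cast card_pos.2 ⟨i₀, hi₀⟩
  have hs0 : 0 < s := by linarith
  have hlower : 0 < ∑ i ∈ S, μ i * ((s - (#S - 1)) * ⟪a i, p i⟫) := by
    have hdiag (i) (hi : i ∈ S) : 0 < (s - (#S - 1)) * ⟪a i, p i⟫ :=
      mul_pos (by linarith) ((h i hi).inner_pos h0)
    exact sum_pos' (fun i hi ↦ mul_nonneg (hμ i hi) (hdiag i hi).le)
      ⟨i₀, hi₀, mul_pos hμi₀ (hdiag i₀ hi₀)⟩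
  have htotal : 0 < s * ∑ j ∈ S, ⟪∑ i ∈ S, μ i • a i, p j⟫ :=
    calc 0 < ∑ i ∈ S, μ i * ((s - (#S - 1)) * ⟪a i, p i⟫) := hlower
      _ ≤ ∑ i ∈ S, μ i * (s * ∑ j ∈ S, ⟪a i, p j⟫) :=
        sum_le_sum fun i hi ↦ mul_le_mul_of_nonneg_left (mul_inner_le_sum_inner h hi) (hμ i hi)
      _ = s * ∑ j ∈ S, ⟪∑ i ∈ S, μ i • a i, p j⟫ := by
        simp only [sum_inner, real_inner_smul_left]
        rw [sum_comm, Finset.mul_sum]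
        simp only [Finset.mul_sum, mul_left_comm]
  exact exists_lt_of_sum_lt (by simpa using pos_of_mul_pos_right htotal hs0.le)

variable {n : ℕ}

lemma card_eq_of_sum_smul_eq_zero [FiniteDimensional ℝ E] [Fintype ι] [Nonempty ι]
    (hn : finrank ℝ E = n + 1) (hs : n < s) (h0 : (0 : E) ∈ interior K)
    (h : ∀ i, IsContactPair K s (a i) (p i)) (hind : AffineIndependent ℝ a) {w : ι → ℝ}
    (hw : ∀ i, 0 < w i) (hsum : ∑ i, w i • a i = 0) : Fintype.card ι = n + 2 := by
  refine le_antisymm ((card_le_finrank_add_one_of_affineIndependent hind).trans_eq (by rw [hn])) ?_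
  by_contra! hlt
  have hcard : (#(Finset.univ : Finset ι) : ℝ) ≤ n + 1 := by
    exact_mod_cast Nat.lt_succ_iff.1 hlt
  obtain ⟨j, -, hj⟩ := exists_inner_sum_smul_pos h0 (fun i _ ↦ h i) (hcard.trans_lt (by linarith))
    (fun i _ ↦ (hw i).le) ⟨Classical.arbitrary ι, Finset.mem_univ _, hw _⟩
  rw [hsum, inner_zero_left] at hj
  exact hj.false

lemma exists_spanning_pos_sum_smul_eq_zero [FiniteDimensional ℝ E] (hn : finrank ℝ E = n + 1)
    (hs : n < s) (h0 : (0 : E) ∈ interior K) {A : Set E}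
    (hA : ∀ b ∈ A, ∃ q, IsContactPair K s b q) (hA0 : (0 : E) ∈ convexHull ℝ A) :
    ∃ (z : Fin (n + 2) → E) (w : Fin (n + 2) → ℝ), (∀ i, z i ∈ A) ∧
      Submodule.span ℝ (range z) = ⊤ ∧ (∀ i, 0 < w i) ∧ ∑ i, w i = 1 ∧ ∑ i, w i • z i = 0 := by
  obtain ⟨ι, _, z, w, hzA, hind, hw, hw1, hsum⟩ := eq_pos_convex_span_of_mem_convexHull hA0
  have : Nonempty ι := by
    by_contra! hempty
    simp at hw1
  choose q hq using fun i ↦ hA (z i) (hzA ⟨i, rfl⟩)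
  have hcard := card_eq_of_sum_smul_eq_zero hn hs h0 hq hind hw hsum
  have hspan : Submodule.span ℝ (range z) = ⊤ := by
    have htop := hind.affineSpan_eq_top_iff_card_eq_finrank_add_one.2 (hcard.trans (by rw [hn]))
    have hle : (affineSpan ℝ (range z) : Set E) ⊆ Submodule.span ℝ (range z) :=
      affineSpan_subset_span
    exact Submodule.eq_top_iff'.2 fun x ↦ hle (by simp [htop])
  let e := (Fintype.equivFinOfCardEq hcard).symm
  refine ⟨z ∘ e, w ∘ e, fun i ↦ hzA ⟨_, rfl⟩, ?_, fun i ↦ hw _, ?_, ?_⟩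
  · rwa [e.surjective.range_comp]
  · exact (e.sum_comp w).trans hw1
  · exact (e.sum_comp fun i ↦ w i • z i).trans hsum

lemma zero_mem_interior_convexHull [FiniteDimensional ℝ E] (hn : finrank ℝ E = n + 1) (hs : n < s)
    (h0 : (0 : E) ∈ interior K) {a p : Fin (n + 2) → E} (h : ∀ i, IsContactPair K s (a i) (p i))
    (hspan : Submodule.span ℝ (range a) = ⊤) {w : Fin (n + 2) → ℝ} (hw : ∀ i, 0 < w i)
    (hsum : ∑ i, w i • a i = 0) : (0 : E) ∈ interior (convexHull ℝ (range p)) := by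
  have : Nontrivial E := nontrivial_of_finrank_pos (R := ℝ) (by omega)
  refine zero_mem_interior_convexHull_of_forall_exists_inner_pos fun u hu ↦ ?_
  obtain ⟨ν, hν⟩ : ∃ ν : Fin (n + 2) → ℝ, ∑ j, ν j • a j = u :=
    (Submodule.mem_span_range_iff_exists_fun ℝ).1 (hspan ▸ Submodule.mem_top)
  obtain ⟨i, μ, hμ, hμi, hμν⟩ := exists_nonneg_sum_smul_eq hw hsum ν
  have hu_eq : ∑ j ∈ Finset.univ.erase i, μ j • a j = u := by
    rw [Finset.sum_erase _ (by rw [hμi, zero_smul]), hμν, hν]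
  have hpos : ∃ j ∈ Finset.univ.erase i, 0 < μ j := by
    by_contra! hle
    refine hu (hu_eq.symm.trans (sum_eq_zero fun j hj ↦ ?_))
    rw [(hle j hj).antisymm (hμ j), zero_smul]
  have hcard : (#(Finset.univ.erase i) : ℝ) < s + 1 := by
    rw [card_erase_of_mem (Finset.mem_univ i)]
    simpa using hs
  obtain ⟨j, -, hj⟩ :=
    exists_inner_sum_smul_pos h0 (fun j _ ↦ h j) hcard (fun j _ ↦ hμ j) hpos
  exact ⟨p j, mem_range_self j, hu_eq ▸ hj⟩

end IsContactPair

end ContactPair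

section SupportFunction

variable {E : Type*} [NormedAddCommGroup E] [InnerProductSpace ℝ E] {K : Set E}

/-- The support function `h_K` of `K`, with junk value `0` where `⟪a, ·⟫` is unbounded on `K` or
`K` is empty. -/
def supportFun (K : Set E) (a : E) : ℝ := sSup ((fun x ↦ ⟪a, x⟫) '' K)

lemma continuous_supportFun (hK : IsCompact K) : Continuous (supportFun K) :=
  hK.continuous_sSup (f := fun a x ↦ ⟪a, x⟫) (by fun_prop)

lemma inner_le_supportFun (hK : IsCompact K) (a : E) {x : E} (hx : x ∈ K) :
    ⟪a, x⟫ ≤ supportFun K a :=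
  le_csSup (hK.image (by fun_prop)).bddAbove (mem_image_of_mem _ hx)

lemma exists_mem_inner_eq_supportFun (hK : IsCompact K) (hne : K.Nonempty) (a : E) :
    ∃ x ∈ K, ⟪a, x⟫ = supportFun K a :=
  (hK.image (f := fun x ↦ ⟪a, x⟫) (by fun_prop)).sSup_mem (hne.image _)

lemma supportFun_le_iff (hK : IsCompact K) (hne : K.Nonempty) {a : E} {r : ℝ} :
    supportFun K a ≤ r ↔ ∀ x ∈ K, ⟪a, x⟫ ≤ r := by
  rw [supportFun, csSup_le_iff (hK.image (by fun_prop)).bddAbove (hne.image _), forall_mem_image]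

lemma mem_iff_forall_inner_le_supportFun [CompleteSpace E] (hconv : Convex ℝ K) (hK : IsCompact K)
    (hne : K.Nonempty) {x : E} : x ∈ K ↔ ∀ a ∈ sphere (0 : E) 1, ⟪a, x⟫ ≤ supportFun K a := by
  refine ⟨fun hx a _ ↦ inner_le_supportFun hK a hx, fun h ↦ ?_⟩
  by_contra hx
  obtain ⟨v, hv⟩ := exists_forall_inner_lt hconv hK.isClosed hx
  have hv0 : v ≠ 0 := by
    rintro rfl
    obtain ⟨y, hy⟩ := hne
    simpa using hv y hy
  obtain ⟨y, hy, hmax⟩ := exists_mem_inner_eq_supportFun hK hne (‖v‖⁻¹ • v)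
  have hle := h (‖v‖⁻¹ • v) (by simpa using norm_smul_inv_norm (𝕜 := ℝ) hv0)
  rw [← hmax, real_inner_smul_left, real_inner_smul_left] at hle
  exact (mul_lt_mul_of_pos_left (hv y hy) (inv_pos.2 (norm_pos_iff.2 hv0))).not_ge hle

end SupportFunction

section MinkowskiAsymmetry

variable {E : Type*} [NormedAddCommGroup E] [InnerProductSpace ℝ E] {K : Set E} {c : E} {s ρ : ℝ}

/-- The Minkowski asymmetry `s(K)` of a set in a real inner product space of any dimension; in the
plane it is `minkAsym` by definition. -/
def minkowskiAsymmetry (K : Set E) : ℝ :=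
  sInf {ρ : ℝ | 0 < ρ ∧ ∃ c : E, K - {c} ⊆ ρ • ({c} - K)}

lemma sub_singleton_subset_smul_iff (hρ : ρ ≠ 0) :
    K - {c} ⊆ ρ • ({c} - K) ↔ ∀ x ∈ K, c - ρ⁻¹ • (x - c) ∈ K := by
  rw [Set.sub_singleton, image_subset_iff]
  refine forall₂_congr fun x _ ↦ ?_
  rw [Set.mem_preimage, mem_smul_set_iff_inv_smul_mem₀ hρ, Set.singleton_sub]
  exact ⟨fun ⟨y, hy, h⟩ ↦ by rwa [← h, sub_sub_cancel], fun h ↦ ⟨_, h, sub_sub_cancel _ _⟩⟩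

lemma subset_smul_neg_iff : K ⊆ ρ • (-K) ↔ K - {0} ⊆ ρ • ({0} - K) := by
  simp

lemma sub_singleton_subset_smul_iff_supportFun [CompleteSpace E] (hconv : Convex ℝ K)
    (hK : IsCompact K) (hne : K.Nonempty) (hρ : 0 < ρ) :
    K - {c} ⊆ ρ • ({c} - K) ↔
      ∀ a ∈ sphere (0 : E) 1, supportFun K (-a) + ⟪a, c⟫ ≤ ρ * (supportFun K a - ⟪a, c⟫) := by
  have hpoint (a x : E) : ⟪a, c - ρ⁻¹ • (x - c)⟫ ≤ supportFun K a ↔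
      ⟪-a, x⟫ ≤ ρ * (supportFun K a - ⟪a, c⟫) - ⟪a, c⟫ := by
    rw [inner_sub_right, real_inner_smul_right, inner_sub_right, inner_neg_left, sub_le_comm,
      le_inv_mul_iff₀ hρ]
    constructor <;> intro h <;> linarith
  simp only [sub_singleton_subset_smul_iff hρ.ne', mem_iff_forall_inner_le_supportFun hconv hK hne,
    ← le_sub_iff_add_le, supportFun_le_iff hK hne, hpoint]
  grind

lemma mem_of_sub_singleton_subset_smul (hconv : Convex ℝ K) (hne : K.Nonempty) (hρ : 0 < ρ)
    (h : K - {c} ⊆ ρ • ({c} - K)) : c ∈ K := by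
  obtain ⟨x, hx⟩ := hne
  have hy := (sub_singleton_subset_smul_iff hρ.ne').1 h x hx
  convert hconv hx hy (a := (1 + ρ)⁻¹) (b := ρ * (1 + ρ)⁻¹) (by positivity) (by positivity)
    (by field_simp) using 1
  match_scalars <;> field_simp <;> ring

lemma zero_mem_interior_of_subset_smul_neg (hconv : Convex ℝ K) (hint : (interior K).Nonempty)
    (hs : 0 < s) (h : K ⊆ s • (-K)) : (0 : E) ∈ interior K := by
  obtain ⟨x, hx⟩ := hint
  have hy : -(s⁻¹ • x) ∈ K := by
    simpa using (sub_singleton_subset_smul_iff hs.ne').1 (subset_smul_neg_iff.1 h) x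
      (interior_subset hx)
  refine hconv.openSegment_interior_self_subset_interior hx hy
    ⟨(1 + s)⁻¹, s * (1 + s)⁻¹, by positivity, by positivity, by field_simp, ?_⟩
  match_scalars
  field_simp
  ring

lemma minkowskiAsymmetry_le (hρ : 0 < ρ) (h : K - {c} ⊆ ρ • ({c} - K)) :
    minkowskiAsymmetry K ≤ ρ :=
  csInf_le ⟨0, fun _ h ↦ h.1.le⟩ ⟨hρ, c, h⟩

lemma exists_sub_singleton_subset_minkowskiAsymmetry_smul [CompleteSpace E] (hconv : Convex ℝ K)
    (hK : IsCompact K) (hne : K.Nonempty) (hs : 0 < minkowskiAsymmetry K) :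
    ∃ c : E, K - {c} ⊆ minkowskiAsymmetry K • ({c} - K) := by
  let admissible : Set (ℝ × K) := {y | ∀ a ∈ sphere (0 : E) 1,
    supportFun K (-a) + ⟪a, (y.2 : E)⟫ ≤ y.1 * (supportFun K a - ⟪a, (y.2 : E)⟫)}
  have hclosed : IsClosed (Prod.fst '' admissible) := by
    have := isCompact_iff_compactSpace.1 hK
    refine isClosedMap_fst_of_compactSpace _ ?_
    simp only [admissible, ofPred_forall]
    exact isClosed_biInter fun a _ ↦ isClosed_le (by fun_prop) (by fun_prop)
  have hsub : {ρ : ℝ | 0 < ρ ∧ ∃ c : E, K - {c} ⊆ ρ • ({c} - K)} ⊆ Prod.fst '' admissible := by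
    rintro ρ ⟨hρ, c, hc⟩
    exact ⟨(ρ, ⟨c, mem_of_sub_singleton_subset_smul hconv hne hρ hc⟩),
      (sub_singleton_subset_smul_iff_supportFun hconv hK hne hρ).1 hc, rfl⟩
  have hnonempty : {ρ : ℝ | 0 < ρ ∧ ∃ c : E, K - {c} ⊆ ρ • ({c} - K)}.Nonempty := by
    by_contra! hempty
    rw [minkowskiAsymmetry, hempty, Real.sInf_empty] at hs
    exact hs.false
  obtain ⟨⟨ρ, c⟩, hc, rfl : ρ = _⟩ := hclosed.closure_subset_iff.2 hsub
    (csInf_mem_closure hnonempty ⟨0, fun _ h ↦ h.1.le⟩)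
  exact ⟨c, (sub_singleton_subset_smul_iff_supportFun hconv hK hne hs).2 hc⟩

lemma minkowskiAsymmetry_lt [ProperSpace E] (hconv : Convex ℝ K)
    (hK : IsCompact K) (hne : K.Nonempty) (hs : 0 < s)
    (h : ∀ a ∈ sphere (0 : E) 1, supportFun K (-a) + ⟪a, c⟫ < s * (supportFun K a - ⟪a, c⟫)) :
    minkowskiAsymmetry K < s := by
  have hcont := continuous_supportFun hK
  have hnear : ∀ᶠ ρ in 𝓝 s, ∀ a ∈ sphere (0 : E) 1,
      supportFun K (-a) + ⟪a, c⟫ < ρ * (supportFun K a - ⟪a, c⟫) :=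
    (isCompact_sphere 0 1).eventually_forall_of_forall_eventually fun a ha ↦
      ContinuousAt.eventually_lt (by fun_prop) (by fun_prop) (h a ha)
  obtain ⟨ρ, hρ, hρ0, hρs⟩ :=
    ((hnear.filter_mono nhdsWithin_le_nhds).and (Ioo_mem_nhdsLT hs)).exists
  refine (minkowskiAsymmetry_le (c := c) hρ0 ?_).trans_lt hρs
  exact (sub_singleton_subset_smul_iff_supportFun hconv hK hne hρ0).2 fun a ha ↦ (hρ a ha).le

end MinkowskiAsymmetry

lemma exists_pos_forall_pos_add_mul {X : Type*} [TopologicalSpace X] {S : Set X}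
    (hS : IsCompact S) {f g : X → ℝ} (hf : Continuous f) (hg : Continuous g)
    (hf_nonneg : ∀ x ∈ S, 0 ≤ f x) (hg_pos : ∀ x ∈ S, f x = 0 → 0 < g x) :
    ∃ ε > 0, ∀ x ∈ S, 0 < f x + ε * g x := by
  have hsmall : ∀ᶠ ε in 𝓝 (0 : ℝ), ∀ x ∈ S, 0 < ε → x ∈ S → 0 < f x + ε * g x := by
    refine hS.eventually_forall_of_forall_eventually fun x hx ↦ ?_
    rcases (hf_nonneg x hx).eq_or_lt' with hfx | hfx
    · have hgx : ∀ᶠ y : ℝ × X in 𝓝 (0, x), 0 < g y.2 :=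
        ContinuousAt.eventually_lt (by fun_prop) (by fun_prop) (hg_pos x hx hfx)
      filter_upwards [hgx] with y hgy hy hyS
      exact add_pos_of_nonneg_of_pos (hf_nonneg _ hyS) (mul_pos hy hgy)
    · have hpos : ∀ᶠ y : ℝ × X in 𝓝 (0, x), 0 < f y.2 + y.1 * g y.2 :=
        ContinuousAt.eventually_lt (by fun_prop) (by fun_prop) (by simpa using hfx)
      exact hpos.mono fun y hy _ _ ↦ hy
  have hpositive : ∀ᶠ ε in 𝓝[>] (0 : ℝ), 0 < ε := self_mem_nhdsWithin
  obtain ⟨ε, hε, hε0⟩ := ((hsmall.filter_mono nhdsWithin_le_nhds).and hpositive).exists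
  exact ⟨ε, hε0, fun x hx ↦ hε x hx hε0 hx⟩

section Optimality

variable {E : Type*} [NormedAddCommGroup E] [InnerProductSpace ℝ E] {K : Set E} {c : E} {s : ℝ}

lemma exists_isContactPair_of_supportFun_neg_eq (hK : IsCompact K) (hne : K.Nonempty)
    (hs : 0 < s) (hcent : K ⊆ s • (-K)) {a : E} (ha : a ≠ 0)
    (hcontact : supportFun K (-a) = s * supportFun K a) : ∃ p, IsContactPair K s a p := by
  obtain ⟨x, hx, hmax⟩ := exists_mem_inner_eq_supportFun hK hne (-a)
  have hp : -(s⁻¹ • x) ∈ K := by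
    simpa using (sub_singleton_subset_smul_iff hs.ne').1 (subset_smul_neg_iff.1 hcent) x hx
  refine ⟨-(s⁻¹ • x), ha, hp, by simpa [smul_smul, hs.ne'] using hx, fun y hy ↦ ?_⟩
  calc ⟪a, y⟫ ≤ supportFun K a := inner_le_supportFun hK a hy
    _ = s⁻¹ * supportFun K (-a) := by rw [hcontact, inv_mul_cancel_left₀ hs.ne']
    _ = ⟪a, -(s⁻¹ • x)⟫ := by
      rw [← hmax, inner_neg_left, inner_neg_right, real_inner_smul_right, mul_neg]

lemma zero_mem_convexHull_contactNormals [FiniteDimensional ℝ E] (hconv : Convex ℝ K)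
    (hK : IsCompact K) (hne : K.Nonempty) (hs : 0 < minkowskiAsymmetry K)
    (hcent : K ⊆ minkowskiAsymmetry K • (-K)) :
    (0 : E) ∈ convexHull ℝ
      {a ∈ sphere (0 : E) 1 | supportFun K (-a) = minkowskiAsymmetry K * supportFun K a} := by
  set s := minkowskiAsymmetry K with hs_def
  have hcont := continuous_supportFun hK
  by_contra h0
  have hcompact : IsCompact {a ∈ sphere (0 : E) 1 | supportFun K (-a) = s * supportFun K a} :=
    (isCompact_sphere 0 1).inter_right (isClosed_eq (by fun_prop) (by fun_prop))
  obtain ⟨v, hv⟩ :=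
    exists_forall_inner_lt (convex_convexHull ℝ _) (isCompact_convexHull hcompact).isClosed h0
  obtain ⟨ε, hε, hpos⟩ := exists_pos_forall_pos_add_mul (isCompact_sphere (0 : E) 1)
    (f := fun a ↦ s * supportFun K a - supportFun K (-a)) (g := fun a ↦ -⟪a, v⟫)
    (by fun_prop) (by fun_prop)
    (fun a ha ↦ by
      simpa using (sub_singleton_subset_smul_iff_supportFun hconv hK hne hs).1
        (subset_smul_neg_iff.1 hcent) a ha)
    (fun a ha hzero ↦ by
      simpa [real_inner_comm] using
        hv a (subset_convexHull ℝ _ ⟨ha, (sub_eq_zero.1 hzero).symm⟩))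
  refine (minkowskiAsymmetry_lt (c := (ε / (1 + s)) • v) hconv hK hne hs fun a ha ↦ ?_).ne hs_def
  have hscale : (1 + s) * ⟪a, (ε / (1 + s)) • v⟫ = ε * ⟪a, v⟫ := by
    rw [real_inner_smul_right]
    field_simp
  linarith [hpos a ha]

lemma IsContactPair.inner_nonpos_of_sub_singleton_subset_smul {a p : E} (hs : 0 < s)
    (h : IsContactPair K s a p) (hc : K - {c} ⊆ s • ({c} - K)) : ⟪a, c⟫ ≤ 0 := by
  have hmem := (sub_singleton_subset_smul_iff hs.ne').1 hc _ h.neg_smul_mem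
  have hle := h.isOuterNormal _ hmem
  have hrw : c - s⁻¹ • (-(s • p) - c) = p + (1 + s⁻¹) • c := by
    match_scalars <;> field_simp
    ring
  rw [hrw, inner_add_right, real_inner_smul_right] at hle
  have : 0 < 1 + s⁻¹ := by positivity
  exact nonpos_of_mul_nonpos_right (by linarith) this

lemma eq_zero_of_forall_inner_nonpos {ι : Type*} [Fintype ι] {a : ι → E} {w : ι → ℝ}
    (hspan : Submodule.span ℝ (range a) = ⊤) (hw : ∀ i, 0 < w i) (hsum : ∑ i, w i • a i = 0)
    (h : ∀ i, ⟪a i, c⟫ ≤ 0) : c = 0 := by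
  have htotal : ∑ i, w i * ⟪a i, c⟫ = 0 := by
    simpa only [sum_inner, real_inner_smul_left, inner_zero_left] using congr(⟪$hsum, c⟫)
  have horth (i) : ⟪a i, c⟫ = 0 := by
    have := (sum_eq_zero_iff_of_nonpos fun i _ ↦
      mul_nonpos_of_nonneg_of_nonpos (hw i).le (h i)).1 htotal i (Finset.mem_univ i)
    exact (mul_eq_zero.1 this).resolve_left (hw i).ne'
  obtain ⟨ν, rfl⟩ : ∃ ν : ι → ℝ, ∑ i, ν i • a i = c :=
    (Submodule.mem_span_range_iff_exists_fun ℝ).1 (hspan ▸ Submodule.mem_top)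
  rw [← inner_self_eq_zero (𝕜 := ℝ), sum_inner]
  simp only [real_inner_smul_left, horth, mul_zero, sum_const_zero]

end Optimality

section FinThree

variable {α β : Type*}

lemma range_fin_three (f : Fin 3 → α) : range f = {f 0, f 1, f 2} := by
  ext x
  simp [Fin.exists_fin_succ, eq_comm]

lemma exists_fin_three_pair_iff {P : α → Prop} {Q : β → Prop} {R : β → α → Prop}
    {S : Set α → Prop} {T : Set β → Prop} :
    (∃ (x : Fin 3 → α) (y : Fin 3 → β),
      (∀ i, P (x i) ∧ Q (y i) ∧ R (y i) (x i)) ∧ S (range x) ∧ T (range y)) ↔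
    ∃ x₁ x₂ x₃ y₁ y₂ y₃, P x₁ ∧ P x₂ ∧ P x₃ ∧ Q y₁ ∧ Q y₂ ∧ Q y₃ ∧ R y₁ x₁ ∧ R y₂ x₂ ∧ R y₃ x₃ ∧
      S {x₁, x₂, x₃} ∧ T {y₁, y₂, y₃} := by
  simp only [range_fin_three]
  constructor
  · rintro ⟨x, y, h, hS, hT⟩
    exact ⟨x 0, x 1, x 2, y 0, y 1, y 2, (h 0).1, (h 1).1, (h 2).1, (h 0).2.1, (h 1).2.1,
      (h 2).2.1, (h 0).2.2, (h 1).2.2, (h 2).2.2, hS, hT⟩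
  · rintro ⟨x₁, x₂, x₃, y₁, y₂, y₃, hP₁, hP₂, hP₃, hQ₁, hQ₂, hQ₃, hR₁, hR₂, hR₃, hS, hT⟩
    exact ⟨![x₁, x₂, x₃], ![y₁, y₂, y₃], Fin.forall_fin_succ.2
      ⟨⟨hP₁, hQ₁, hR₁⟩, Fin.forall_fin_two.2 ⟨⟨hP₂, hQ₂, hR₂⟩, hP₃, hQ₃, hR₃⟩⟩, hS, hT⟩

end FinThree

section Characterization

variable {E : Type*} [NormedAddCommGroup E] [InnerProductSpace ℝ E] [FiniteDimensional ℝ E]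
  {K : Set E} {n : ℕ}

lemma exists_contactPairs_of_subset_smul_neg (hn : finrank ℝ E = n + 1) (hconv : Convex ℝ K)
    (hK : IsCompact K) (hint : (interior K).Nonempty) (hs : n < minkowskiAsymmetry K)
    (hcent : K ⊆ minkowskiAsymmetry K • (-K)) :
    ∃ p a : Fin (n + 2) → E, (∀ i, IsContactPair K (minkowskiAsymmetry K) (a i) (p i)) ∧
      (0 : E) ∈ interior (convexHull ℝ (range p)) ∧ (0 : E) ∈ convexHull ℝ (range a) := by
  have hs0 : 0 < minkowskiAsymmetry K := n.cast_nonneg.trans_lt hs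
  have hne : K.Nonempty := hint.mono interior_subset
  have h0 := zero_mem_interior_of_subset_smul_neg hconv hint hs0 hcent
  have hnormals := fun (a : E) (ha : a ∈ {a ∈ sphere (0 : E) 1 |
      supportFun K (-a) = minkowskiAsymmetry K * supportFun K a}) ↦
    exists_isContactPair_of_supportFun_neg_eq hK hne hs0 hcent
      (ne_zero_of_mem_unit_sphere ⟨a, ha.1⟩) ha.2
  obtain ⟨a, w, ha, hspan, hw, hw1, hsum⟩ :=
    IsContactPair.exists_spanning_pos_sum_smul_eq_zero hn hs h0 hnormals
      (zero_mem_convexHull_contactNormals hconv hK hne hs0 hcent)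
  choose p hp using fun i ↦ hnormals (a i) (ha i)
  refine ⟨p, a, hp, IsContactPair.zero_mem_interior_convexHull hn hs h0 hp hspan hw hsum, ?_⟩
  exact hsum ▸ (convex_convexHull ℝ _).sum_mem (fun i _ ↦ (hw i).le) hw1
    fun i _ ↦ subset_convexHull ℝ _ (mem_range_self i)

lemma subset_smul_neg_of_contactPairs (hn : finrank ℝ E = n + 1) (hconv : Convex ℝ K)
    (hK : IsCompact K) (hs : n < minkowskiAsymmetry K) {ι : Type*} {p a : ι → E}
    (h : ∀ i, IsContactPair K (minkowskiAsymmetry K) (a i) (p i))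
    (hp0 : (0 : E) ∈ interior (convexHull ℝ (range p))) (ha0 : (0 : E) ∈ convexHull ℝ (range a)) :
    K ⊆ minkowskiAsymmetry K • (-K) := by
  have hs0 : 0 < minkowskiAsymmetry K := n.cast_nonneg.trans_lt hs
  have h0 : (0 : E) ∈ interior K :=
    interior_mono (convexHull_min (range_subset_iff.2 fun i ↦ (h i).mem) hconv) hp0
  obtain ⟨c, hc⟩ := exists_sub_singleton_subset_minkowskiAsymmetry_smul hconv hK
    ⟨0, interior_subset h0⟩ hs0
  obtain ⟨z, w, hz, hspan, hw, -, hsum⟩ := IsContactPair.exists_spanning_pos_sum_smul_eq_zero hn hs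
    h0 (forall_mem_range.2 fun i ↦ ⟨p i, h i⟩) ha0
  have hc0 : c = 0 := eq_zero_of_forall_inner_nonpos hspan hw hsum fun i ↦ by
    obtain ⟨j, hj⟩ := hz i
    exact hj ▸ (h j).inner_nonpos_of_sub_singleton_subset_smul hs0 hc
  exact subset_smul_neg_iff.2 (hc0 ▸ hc)

theorem stmt7_general (hn : finrank ℝ E = n + 1) (hconv : Convex ℝ K) (hK : IsCompact K)
    (hint : (interior K).Nonempty) (hs : n < minkowskiAsymmetry K) :
    K ⊆ minkowskiAsymmetry K • (-K) ↔
      ∃ p a : Fin (n + 2) → E,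
        (∀ i, p i ∈ frontier K ∩ (-(minkowskiAsymmetry K)⁻¹) • K ∧ a i ≠ 0 ∧
          IsOuterNormal K (a i) (p i)) ∧
        (0 : E) ∈ interior (convexHull ℝ (range p)) ∧ (0 : E) ∈ convexHull ℝ (range a) := by
  simp only [← isContactPair_iff hK.isClosed (n.cast_nonneg.trans_lt hs).ne']
  exact ⟨exists_contactPairs_of_subset_smul_neg hn hconv hK hint hs,
    fun ⟨_, _, h, hp0, ha0⟩ ↦ subset_smul_neg_of_contactPairs hn hconv hK hs h hp0 ha0⟩

end Characterization

theorem stmt7 (K : Set E2) (hK : IsConvexBody K) (hs : 1 < minkAsym K) :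
    MinkCentered K ↔
      ∃ p1 p2 p3 a1 a2 a3 : E2,
        p1 ∈ frontier K ∩ ((-(minkAsym K)⁻¹) • K) ∧
        p2 ∈ frontier K ∩ ((-(minkAsym K)⁻¹) • K) ∧
        p3 ∈ frontier K ∩ ((-(minkAsym K)⁻¹) • K) ∧
        a1 ≠ 0 ∧ a2 ≠ 0 ∧ a3 ≠ 0 ∧
        (∀ x ∈ K, (inner ℝ a1 x : ℝ) ≤ inner ℝ a1 p1) ∧
        (∀ x ∈ K, (inner ℝ a2 x : ℝ) ≤ inner ℝ a2 p2) ∧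
        (∀ x ∈ K, (inner ℝ a3 x : ℝ) ≤ inner ℝ a3 p3) ∧
        (0 : E2) ∈ interior (convexHull ℝ {p1, p2, p3}) ∧
        (0 : E2) ∈ convexHull ℝ {a1, a2, a3} := by
  exact (stmt7_general (n := 1) finrank_euclideanSpace_fin hK.1 hK.2.1 hK.2.2
    (by rwa [Nat.cast_one])).trans <| exists_fin_three_pair_iff
      (P := (· ∈ frontier K ∩ (-(minkAsym K)⁻¹) • K)) (Q := (· ≠ 0)) (R := IsOuterNormal K)
      (S := fun A ↦ (0 : E2) ∈ interior (convexHull ℝ A)) (T := fun A ↦ (0 : E2) ∈ convexHull ℝ A)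
end
end
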